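/- arXiv:2010.01860 — 4 statements merged into one kernel-verified Lean document; each statement's English description precedes it below -/
import Mathlib

section
/- There exist an irrational α ∈ (0,1) and irrational numbers 0 < β₁ < β₂ < 1 with β₁ ≠ 1 − α, β₂ ≠ 1 − α, β₁ ∉ ℤ + αℤ, β₂ ∉ ℤ + αℤ and β₂ − β₁ ∉ ℤ + αℤ, such that, taking d = 2, r = 2 and the permutations σ₀ = σ₂ = identity of {1,2} and σ₁ = the exchange of {1,2}, the generalized Veech–Sataev system T is uniquely ergodic, its language L(T) is not linearly recurrent, and T is not rigid with respect to its unique invariant Borel probability measure. -/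
open MeasureTheory Filter Set
open scoped ENNReal symmDiff Classical

noncomputable section

/-! ### Generic measurable dynamics -/

/-- `(X, T, μ)` is rigid: for some sequence `q n → ∞`, `μ (T^[q n] '' A ∆ A) → 0`
for every measurable set `A`. -/
def Rigid {X : Type*} [MeasurableSpace X] (T : X → X) (μ : Measure X) : Prop :=
  ∃ q : ℕ → ℕ, Tendsto q atTop atTop ∧
    ∀ A : Set X, MeasurableSet A →
      Tendsto (fun n => μ (((T^[q n]) '' A) ∆ A)) atTop (nhds 0)

/-- `T` is uniquely ergodic: it admits exactly one invariant Borel probability measure. -/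
def UniquelyErgodicMap {X : Type*} [MeasurableSpace X] (T : X → X) : Prop :=
  ∃! μ : Measure X, IsProbabilityMeasure μ ∧ MeasurePreserving T μ μ

/-- `(X, T, μ)` is of rank one. -/
def RankOne {X : Type*} [MeasurableSpace X] (T : X → X) (μ : Measure X) : Prop :=
  ∃ F : ℕ → Set X, ∃ h : ℕ → ℕ, (∀ n, 1 ≤ h n) ∧ (∀ n, MeasurableSet (F n)) ∧
    (∀ n, ∀ i < h n, ∀ j < h n, i ≠ j → Disjoint ((T^[i]) '' F n) ((T^[j]) '' F n)) ∧
    ∀ A : Set X, MeasurableSet A → ∀ ε : ℝ≥0∞, 0 < ε → ∃ n : ℕ, ∃ s : Finset ℕ, ∃ rem : Bool,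
      (∀ i ∈ s, i < h n) ∧
      μ (A ∆ ((⋃ i ∈ s, (T^[i]) '' F n) ∪
        (if rem then (⋃ i ∈ Finset.range (h n), (T^[i]) '' F n)ᶜ else (∅ : Set X)))) < ε

/-! ### Words, languages, symbolic systems -/

/-- `w` is a factor of `v`. -/
def IsFactor {A : Type*} (w v : List A) : Prop := ∃ u u' : List A, v = u ++ w ++ u'

/-- `L` is a language: nonempty, closed under factors, and every word extends to a longer one. -/
def IsLanguage {A : Type*} (L : Set (List A)) : Prop :=
  L.Nonempty ∧ (∀ v ∈ L, ∀ w : List A, IsFactor w v → w ∈ L) ∧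
    (∀ w ∈ L, ∃ v ∈ L, w.length < v.length ∧ IsFactor w v)

/-- `L` is linearly recurrent: for some `K`, every word of length `n` occurs in
every word of length at least `K n`. -/
def LinearlyRecurrent {A : Type*} (L : Set (List A)) : Prop :=
  ∃ K : ℕ, 1 ≤ K ∧ ∀ w ∈ L, ∀ v ∈ L, K * w.length ≤ v.length → IsFactor w v

/-- `L` is minimal. -/
def MinimalLang {A : Type*} (L : Set (List A)) : Prop :=
  ∀ w ∈ L, ∃ n : ℕ, ∀ v ∈ L, v.length = n → IsFactor w v

/-- The factor of a sequence starting at `i`, of length `s`. -/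
def wordAt {A : Type*} (x : ℕ → A) (i s : ℕ) : List A := List.ofFn fun j : Fin s => x (i + j)

/-- The subshift `X_L`: sequences all of whose finite factors lie in `L`. -/
def XL {A : Type*} (L : Set (List A)) : Set (ℕ → A) := {x | ∀ i s : ℕ, wordAt x i s ∈ L}

/-- The one-sided shift `S` on `X_L`. -/
def shiftXL {A : Type*} (L : Set (List A)) (x : XL L) : XL L :=
  ⟨fun n => x.1 (n + 1), fun i s => by
    have h := x.2 (i + 1) s
    have e : wordAt (fun n => x.1 (n + 1)) i s = wordAt x.1 (i + 1) s := by
      unfold wordAt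
      refine congrArg List.ofFn (funext fun j => congrArg x.1 ?_)
      omega
    rw [e]
    exact h⟩

/-- The cylinder `[w] ⊆ X_L` of a word `w`. -/
def langCylinder {A : Type*} (L : Set (List A)) (w : List A) : Set (XL L) :=
  {x | ∀ i : Fin w.length, x.1 i = w.get i}

/-- `e_n(S, μ)`: the smallest positive measure of a cylinder of a word of `L` of length `n`. -/
def cylMinMeasure {A : Type*} [MeasurableSpace A] (L : Set (List A))
    (μ : Measure (XL L)) (n : ℕ) : ℝ≥0∞ :=
  sInf {v : ℝ≥0∞ | ∃ w ∈ L, w.length = n ∧ v = μ (langCylinder L w) ∧ 0 < v}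

/-! ### Continued fraction data of `α` -/

/-- `ℤ + αℤ`. -/
def ZPlusAlphaZ (α : ℝ) : Set ℝ := {x | ∃ m k : ℤ, x = (m : ℝ) + (k : ℝ) * α}

/-- `(α_{n-1}, α_n)` computed by the Euclidean algorithm, with `α_{-1} = 1`, `α_0 = α`. -/
def cfPair (α : ℝ) : ℕ → ℝ × ℝ
  | 0 => (1, α)
  | n + 1 =>
    ((cfPair α n).2, (cfPair α n).1 - (⌊(cfPair α n).1 / (cfPair α n).2⌋ : ℝ) * (cfPair α n).2)

/-- `α_n = |q_n α - p_n|`. -/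
def alphaSeq (α : ℝ) (n : ℕ) : ℝ := (cfPair α n).2

/-- The partial quotient `a_n = ⌊α_{n-2} / α_{n-1}⌋` (meaningful for `n ≥ 1`). -/
def pq (α : ℝ) (n : ℕ) : ℕ := (⌊(cfPair α (n - 1)).1 / (cfPair α (n - 1)).2⌋).toNat

/-- `(q_{n-1}, q_n)`, with `q_{-1} = 0`, `q_0 = 1` and `q_{n+1} = a_{n+1} q_n + q_{n-1}`. -/
def qPair (α : ℝ) : ℕ → ℕ × ℕ
  | 0 => (0, 1)
  | n + 1 => ((qPair α n).2, pq α (n + 1) * (qPair α n).2 + (qPair α n).1)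

/-- `q_n`. -/
def qDen (α : ℝ) (n : ℕ) : ℕ := (qPair α n).2

/-- `α` has bounded partial quotients. -/
def BoundedPartialQuotients (α : ℝ) : Prop := ∃ C : ℕ, ∀ n : ℕ, 1 ≤ n → pq α n ≤ C

/-! ### Rokhlin towers for the rotation and Ostrowski digits -/

/-- `x` lies in the arc `[a, a + l)` modulo 1. -/
def inArc (x a l : ℝ) : Prop := ∃ m : ℤ, a ≤ x + m ∧ x + m < a + l

/-- Left endpoint of the basis `B_n` of the large `n`-tower. -/
def largeBase (α : ℝ) (n : ℕ) : ℝ :=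
  if Odd n then α - alphaSeq α (n - 1) + alphaSeq α n else α - alphaSeq α n

/-- Left endpoint of the basis `B'_n` of the small `n`-tower. -/
def smallBase (α : ℝ) (n : ℕ) : ℝ :=
  if Odd n then α - alphaSeq α (n - 1) else α + alphaSeq α (n - 1) - alphaSeq α n

/-- Membership in the basis `B_n` of the large `n`-tower. -/
def InLargeBase (α : ℝ) (n : ℕ) (x : ℝ) : Prop := inArc x (largeBase α n) (alphaSeq α (n - 1))

/-- Distance from `x` to the reference endpoint (left endpoint for `n` odd, right
endpoint for `n` even) of the level `k` of the large `n`-tower. -/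
def levelDist (α : ℝ) (n k : ℕ) (x : ℝ) : ℝ :=
  if Odd n then x - (largeBase α n + (k : ℝ) * α)
  else (largeBase α n + alphaSeq α (n - 1) + (k : ℝ) * α) - x

/-- `x` lies in column `(b)` of the large `n`-tower. -/
def InLargeColumn (α : ℝ) (n b : ℕ) (x : ℝ) : Prop :=
  ∃ k : ℕ, k < qDen α n ∧
    inArc (levelDist α n k x) ((b : ℝ) * alphaSeq α n)
      (if b = pq α (n + 1) then alphaSeq α (n - 1) - (pq α (n + 1) : ℝ) * alphaSeq α n
       else alphaSeq α n)

/-- `x` lies in the small `n`-tower. -/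
def InSmallTower (α : ℝ) (n : ℕ) (x : ℝ) : Prop :=
  ∃ k : ℕ, k < (qPair α n).1 ∧ inArc x (smallBase α n + (k : ℝ) * α) (alphaSeq α n)

/-- The Ostrowski digit `b_m(β)` (meaningful for `m ≥ 2`), read in the towers at stage `m - 1`:
it is `b` if `β` lies in column `(b)` of the large `(m-1)`-tower with `b ≥ 1`, and `0`
otherwise. -/
def ostB (α β : ℝ) (m : ℕ) : ℕ :=
  if h : ∃ b : ℕ, 1 ≤ b ∧ InLargeColumn α (m - 1) b β then h.choose else 0

/-! ### Isolation and clustering of marked points -/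

/-- The marked point `β_j` (with `β_j ≠ 1 - α`) is `(n, M)`-isolated. -/
def BetaIsolated {r : ℕ} (α : ℝ) (β : Fin r → ℝ) (j : Fin r) (n M : ℕ) : Prop :=
  (∃ m₁ : ℕ, n - M ≤ m₁ ∧ m₁ ≤ n ∧ ostB α (β j) m₁ ≠ pq α m₁ - 1) ∧
  (∃ m₂ : ℕ, n - M ≤ m₂ ∧ m₂ ≤ n ∧ Odd m₂ ∧ ostB α (β j) m₂ ≠ pq α m₂) ∧
  (∃ m₃ : ℕ, n - M ≤ m₃ ∧ m₃ ≤ n ∧ Even m₃ ∧ ostB α (β j) m₃ ≠ pq α m₃) ∧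
  ∀ i : Fin r, i ≠ j → β i ≠ 1 - α →
    ∃ m' : ℕ, n - M ≤ m' ∧ m' ≤ n ∧ ostB α (β j) m' ≠ ostB α (β i) m'

/-- The point `α` is `(n, M)`-isolated. -/
def AlphaIsolated {r : ℕ} (α : ℝ) (β : Fin r → ℝ) (n M : ℕ) : Prop :=
  ∀ i : Fin r, β i ≠ 1 - α →
    (∃ m : ℕ, n - M ≤ m ∧ m ≤ n ∧ ostB α (β i) m ≠ pq α m - 1) ∧
    (∃ m' : ℕ, n - M ≤ m' ∧ m' ≤ n ∧ Odd m' ∧ ostB α (β i) m' ≠ pq α m') ∧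
    (∃ m'' : ℕ, n - M ≤ m'' ∧ m'' ≤ n ∧ Even m'' ∧ ostB α (β i) m'' ≠ pq α m'')

/-- All the marked points `β_i` (with `β_i ≠ 1 - α`) cluster on `α`. -/
def ClusterOnAlpha {r : ℕ} (α : ℝ) (β : Fin r → ℝ) : Prop :=
  ∃ m N : ℕ → ℕ, Tendsto m atTop atTop ∧ Tendsto N atTop atTop ∧
    (∀ k : ℕ, m k + N k < m (k + 1)) ∧
    ∀ k : ℕ, ∀ i : Fin r, β i ≠ 1 - α →
      (∀ n, m k ≤ n → n ≤ m k + N k → ostB α (β i) n = pq α n - 1) ∨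
      (∀ n, m k ≤ n → n ≤ m k + N k → Even n → ostB α (β i) n = pq α n) ∨
      (∀ n, m k ≤ n → n ≤ m k + N k → Odd n → ostB α (β i) n = pq α n)

/-! ### The generalized Veech–Sataev system -/

instance : Fact ((0 : ℝ) < 1) := ⟨zero_lt_one⟩

/-- The representative in `[0, 1)` of a point of the circle `ℝ/ℤ`. -/
def circleRepr (x : AddCircle (1 : ℝ)) : ℝ := (AddCircle.equivIco 1 0 x).1

/-- The rotation `R` of angle `α` on the circle. -/
def rotMap (α : ℝ) : AddCircle (1 : ℝ) → AddCircle (1 : ℝ) := fun x => x + (α : AddCircle (1 : ℝ))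

/-- The index `j ∈ {0, …, r}` such that `β_j ≤ x < β_{j+1}` (with `β_0 = 0`,
`β_{r+1} = 1`), i.e. the number of marked points `≤ x`. -/
def atomIdx {r : ℕ} (β : Fin r → ℝ) (x : ℝ) : Fin (r + 1) :=
  ⟨(Finset.univ.filter fun i => β i ≤ x).card,
    Nat.lt_succ_of_le (le_trans (Finset.card_filter_le _ _) (by simp))⟩

/-- The permutation `σ(x)`. -/
def sigmaOf {r d : ℕ} (β : Fin r → ℝ) (σ : Fin (r + 1) → Equiv.Perm (Fin d)) (x : ℝ) :
    Equiv.Perm (Fin d) := σ (atomIdx β x)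

/-- The generalized Veech–Sataev map `T(x, s) = (Rx, σ(x) s)` on `(ℝ/ℤ) × {1, …, d}`. -/
def VST {r d : ℕ} (α : ℝ) (β : Fin r → ℝ) (σ : Fin (r + 1) → Equiv.Perm (Fin d)) :
    AddCircle (1 : ℝ) × Fin d → AddCircle (1 : ℝ) × Fin d :=
  fun p => (rotMap α p.1, sigmaOf β σ (circleRepr p.1) p.2)

/-- Standing conditions on the marked points `β_1 < … < β_r`. -/
def MarkedPointsCond {r : ℕ} (α : ℝ) (β : Fin r → ℝ) : Prop :=
  (∀ i : Fin r, Irrational (β i) ∧ 0 < β i ∧ β i < 1) ∧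
  StrictMono β ∧
  (∀ i : Fin r, β i ≠ 1 - α → β i ∉ ZPlusAlphaZ α) ∧
  (∀ i j : Fin r, i ≠ j → β i ≠ 1 - α → β j ≠ 1 - α → β i - β j ∉ ZPlusAlphaZ α)

/-- Adjacent permutations are distinct: `σ_j ≠ σ_{j+1}` for `0 ≤ j ≤ r - 1`. -/
def SigmaAdjacentCond {r d : ℕ} (σ : Fin (r + 1) → Equiv.Perm (Fin d)) : Prop :=
  ∀ j : Fin r, σ j.castSucc ≠ σ j.succ

/-- The minimality condition: no nonempty proper subset of `{1, …, d}` is invariant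
under all the `σ_i`. -/
def MinimalityCondition {r d : ℕ} (σ : Fin (r + 1) → Equiv.Perm (Fin d)) : Prop :=
  ¬ ∃ A : Set (Fin d), A.Nonempty ∧ A ≠ Set.univ ∧ ∀ j : Fin (r + 1), (σ j) '' A = A

/-- The product inequality. -/
def ProductInequality {r d : ℕ} (α : ℝ) (β : Fin r → ℝ)
    (σ : Fin (r + 1) → Equiv.Perm (Fin d)) : Prop :=
  (∀ t : Fin r, β t = 1 - α → σ (Fin.last r) * σ t.castSucc ≠ σ 0 * σ t.succ) ∧
  ((∀ i : Fin r, β i ≠ 1 - α) → σ (Fin.last r) ≠ σ 0)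

/-! ### Codings -/

/-- The letter read by the rotation with marked points at time `i`. -/
def rotCode {r : ℕ} (α : ℝ) (β : Fin r → ℝ) (x : AddCircle (1 : ℝ)) (i : ℕ) : Fin (r + 1) :=
  atomIdx β (circleRepr ((rotMap α)^[i] x))

/-- The language `L'` of the rotation with marked points `β_1, …, β_r`. -/
def LRot {r : ℕ} (α : ℝ) (β : Fin r → ℝ) : Set (List (Fin (r + 1))) :=
  {w | ∃ x : AddCircle (1 : ℝ), ∀ i : Fin w.length, w.get i = rotCode α β x i.1}

/-- The letter of the natural coding of `T` at a point. -/
def vsCode {r d : ℕ} (β : Fin r → ℝ) (p : AddCircle (1 : ℝ) × Fin d) : Fin (r + 1) × Fin d :=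
  (atomIdx β (circleRepr p.1), p.2)

/-- The language `L(T)` of the natural coding of the generalized Veech–Sataev system. -/
def LVST {r d : ℕ} (α : ℝ) (β : Fin r → ℝ) (σ : Fin (r + 1) → Equiv.Perm (Fin d)) :
    Set (List (Fin (r + 1) × Fin d)) :=
  {w | ∃ p : AddCircle (1 : ℝ) × Fin d,
    ∀ i : Fin w.length, w.get i = vsCode β ((VST α β σ)^[i.1] p)}

/-- Bounded runs: there is a bound on the number of consecutive integers satisfying `P`. -/
def BoundedRun (P : ℕ → Prop) : Prop :=
  ∃ B : ℕ, ∀ m : ℕ, ∃ n : ℕ, m ≤ n ∧ n ≤ m + B ∧ ¬ P n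

end

/-!
Take `α` badly approximable and `β₂ = β₁ + 1/2` with `β₁ < 1/2`. Then `T` is the skew product of
the rotation by the `ℤ/2ℤ`-valued indicator `f` of the half-circle `[β₁, β₁ + 1/2)`.

*Unique ergodicity.* The half-turn `h` commutes with the rotation and changes `f` into `f + 1`. If
`v` is the part of an invariant function that is odd in the fibre, the rotation preserves `v ^ 2`
and changes the sign of `v * v ∘ h`. Both are then constant and the second one is zero, so `v = 0`
and `T` is ergodic for the product measure. Any invariant probability measure projects to Lebesgue
measure, hence is absolutely continuous with respect to the product measure and equal to it.

*Absence of rigidity.* Since translates of `f` by a short distance differ from `f` only near `β₁`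
and `β₁ + 1/2`, bad approximability shows that the Birkhoff sum of length `q` is non-zero on a set
of measure bounded below uniformly in `q`. On that set `T^q` changes the fibre coordinate.

*Failure of linear recurrence.* A generic `β₁` is approximated from below by some `k α + p` much
better than `1 / k`. The word of length `k + 1` starting at `0` then marks an interval so short
that, `α` being badly approximable, the orbit needs a time much longer than `k` to return to it.
-/

namespace VeechSataev

section SkewProduct

variable {X G : Type*} [AddCommGroup G]

/-- The skew product `(x, s) ↦ (R x, s + f x)` over the base map `R` with cocycle `f`. -/
def skewProduct (R : X → X) (f : X → G) (p : X × G) : X × G := (R p.1, p.2 + f p.1)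

theorem skewProduct_iterate (R : X → X) (f : X → G) (n : ℕ) (p : X × G) :
    (skewProduct R f)^[n] p = (R^[n] p.1, p.2 + birkhoffSum R f n p.1) := by
  induction n with
  | zero => simp
  | succ n ih =>
    rw [Function.iterate_succ_apply', ih, Function.iterate_succ_apply', birkhoffSum_succ,
      ← add_assoc]
    rfl

theorem semiconj_fst_skewProduct (R : X → X) (f : X → G) :
    Function.Semiconj Prod.fst (skewProduct R f) R := fun _ ↦ rfl

variable [MeasurableSpace X] [MeasurableSpace G] {μ : Measure X} {ν : Measure G}
  {R : X → X} {f : X → G}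

theorem measurePreserving_skewProduct [MeasurableAdd₂ G] [SFinite μ] [SFinite ν]
    [ν.IsAddRightInvariant] (hR : MeasurePreserving R μ μ) (hf : Measurable f) :
    MeasurePreserving (skewProduct R f) (μ.prod ν) (μ.prod ν) :=
  hR.skew_product (g := fun x s ↦ s + f x) (by fun_prop)
    (ae_of_all _ fun x ↦ map_add_right_eq_self ν (f x))

end SkewProduct

section AbsolutelyContinuous

variable {X Y : Type*} [MeasurableSpace X] [MeasurableSpace Y] {μ : Measure X} {ν : Measure Y}

theorem absolutelyContinuous_prod_of_map_fst [SFinite ν] (hν : ∀ y, ν {y} ≠ 0)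
    {ρ : Measure (X × Y)} (hρ : ρ.map Prod.fst ≪ μ) : ρ ≪ μ.prod ν := by
  intro A hA0
  have hempty : ∀ᵐ x ∂μ, Prod.mk x ⁻¹' A = ∅ := by
    filter_upwards [Measure.measure_ae_null_of_prod_null hA0] with x hx
    exact eq_empty_of_forall_notMem fun y hy ↦
      hν y (measure_mono_null (singleton_subset_iff.2 hy) hx)
  have hfst : ∀ᵐ p ∂ρ, Prod.mk p.1 ⁻¹' A = ∅ :=
    ae_of_ae_map measurable_fst.aemeasurable (hρ.ae_le hempty)
  refine measure_mono_null (fun p hp ↦ ?_) (ae_iff.1 hfst)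
  exact Set.Nonempty.ne_empty ⟨p.2, show (p.1, p.2) ∈ A from hp⟩

end AbsolutelyContinuous

section Parity

variable {X : Type*} [MeasurableSpace X] {μ : Measure X} {R h : X → X}

/- The function `v * v ∘ h` changes sign under `R`, so it vanishes by ergodicity of `R^[2]`; as
`v ^ 2` is constant, `v` vanishes as well. -/
theorem ae_eq_zero_of_comp_eq_sign_mul (hR : Measure.QuasiMeasurePreserving R μ μ)
    (hR2 : Ergodic R^[2] μ) (hh : Measure.QuasiMeasurePreserving h μ μ)
    (hhR : Function.Commute h R) {ε v : X → ℝ} (hε : ∀ x, ε x ^ 2 = 1)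
    (hεh : ∀ x, ε (h x) = -ε x) (hv : Measurable v) (hvR : ∀ x, v (R x) = ε x * v x) :
    v =ᵐ[μ] 0 := by
  have hhm := hh.measurable
  let P : X → ℝ := fun x ↦ v x * v (h x)
  have hPR (x : X) : P (R x) = -P x := by
    have hRh : v (h (R x)) = -ε x * v (h x) := by rw [hhR x, hvR, hεh]
    simp only [P, hvR, hRh]
    linear_combination -(v x * v (h x)) * hε x
  have hsqR (x : X) : v (R x) ^ 2 = v x ^ 2 := by rw [hvR, mul_pow, hε, one_mul]
  obtain ⟨d, hd⟩ := hR2.ae_eq_const_of_ae_eq_comp (g := P) (by fun_prop)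
    (funext fun x ↦ by simp [hPR])
  obtain ⟨c, hc⟩ := hR2.ae_eq_const_of_ae_eq_comp (g := fun x ↦ v x ^ 2) (by fun_prop)
    (funext fun x ↦ by simp [hsqR])
  filter_upwards [hd, hR.ae hd, hc, hh.ae hc] with x hPx hPRx hvx hvhx
  have hP0 : P x = 0 := by linarith [hPR x, hPx.trans hPRx.symm]
  have hvh : v (h x) ^ 2 = v x ^ 2 := hvhx.trans hvx.symm
  have hv4 : (v x ^ 2) ^ 2 = 0 := by
    linear_combination -v x ^ 2 * hvh + P x * hP0
  simpa using hv4

variable {f : X → Fin 2} {ν : Measure (Fin 2)}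

theorem ae_eq_const_of_comp_skewProduct_eq [SFinite ν]
    (hR : Measure.QuasiMeasurePreserving R μ μ) (hR2 : Ergodic R^[2] μ)
    (hh : Measure.QuasiMeasurePreserving h μ μ) (hhR : Function.Commute h R)
    (hfh : ∀ x, f (h x) = f x + 1) {w : X × Fin 2 → ℝ} (hw : Measurable w)
    (hwT : w ∘ skewProduct R f = w) : ∃ c, w =ᵐ[μ.prod ν] fun _ ↦ c := by
  have hfcases (x : X) : f x = 0 ∨ f x = 1 := by lia
  have hwR (x : X) (s : Fin 2) : w (R x, s + f x) = w (x, s) := congrFun hwT (x, s)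
  have hsum (x : X) : w (R x, 0) + w (R x, 1) = w (x, 0) + w (x, 1) := by
    rw [← hwR x 0, ← hwR x 1]
    rcases hfcases x with hfx | hfx <;> simp [hfx, add_comm]
  obtain ⟨c, hc⟩ := hR2.ae_eq_const_of_ae_eq_comp (g := fun x ↦ w (x, 0) + w (x, 1))
    (by fun_prop) (funext fun x ↦ by simp [hsum])
  have hdiff : (fun x ↦ w (x, 0) - w (x, 1)) =ᵐ[μ] 0 := by
    refine ae_eq_zero_of_comp_eq_sign_mul (ε := fun x ↦ (-1) ^ (f x : ℕ)) hR hR2 hh hhR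
      (fun x ↦ ?_) (fun x ↦ ?_) (by fun_prop) fun x ↦ ?_
    · rw [← pow_mul, mul_comm, pow_mul, neg_one_sq, one_pow]
    · rcases hfcases x with hfx | hfx <;> simp [hfh, hfx]
    · rw [← hwR x 0, ← hwR x 1]
      rcases hfcases x with hfx | hfx <;> simp [hfx]
  refine ⟨c / 2, ?_⟩
  filter_upwards [Measure.quasiMeasurePreserving_fst.ae hc,
    Measure.quasiMeasurePreserving_fst.ae hdiff] with ⟨x, s⟩ hadd hsub
  simp only [Pi.zero_apply, Function.const_apply] at hadd hsub
  obtain rfl | rfl : s = 0 ∨ s = 1 := by lia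
  · linarith
  · linarith

theorem ergodic_skewProduct_of_comp_eq_add_one [SFinite μ] [SFinite ν] [ν.IsAddRightInvariant]
    (hR : MeasurePreserving R μ μ) (hR2 : Ergodic R^[2] μ) (hf : Measurable f)
    (hh : Measure.QuasiMeasurePreserving h μ μ) (hhR : Function.Commute h R)
    (hfh : ∀ x, f (h x) = f x + 1) : Ergodic (skewProduct R f) (μ.prod ν) := by
  refine ⟨measurePreserving_skewProduct hR hf, ⟨fun A hA hAinv ↦ ?_⟩⟩
  refine EventuallyConst.of_indicator_const (c := (1 : ℝ)) ?_ one_ne_zero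
  refine eventuallyConst_iff_exists_eventuallyEq.2 <| ae_eq_const_of_comp_skewProduct_eq
    hR.quasiMeasurePreserving hR2 hh hhR hfh (measurable_const.indicator hA) ?_
  exact funext fun p ↦ congrArg (fun B ↦ B.indicator (fun _ ↦ (1 : ℝ)) p) hAinv

end Parity

section UniqueErgodicity

variable {X G : Type*} [AddCommGroup G] [MeasurableSpace X] [MeasurableSpace G]
  {μ : Measure X} {ν : Measure G} {R : X → X} {f : X → G}

theorem eq_prod_of_measurePreserving_skewProduct [IsProbabilityMeasure μ] [IsProbabilityMeasure ν]
    (hν : ∀ g, ν {g} ≠ 0)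
    (hR : ∀ m : Measure X, IsProbabilityMeasure m → MeasurePreserving R m m → m = μ)
    (hRm : Measurable R) (herg : Ergodic (skewProduct R f) (μ.prod ν))
    {ρ : Measure (X × G)} [IsProbabilityMeasure ρ]
    (hρ : MeasurePreserving (skewProduct R f) ρ ρ) : ρ = μ.prod ν := by
  have hfst : MeasurePreserving R (ρ.map Prod.fst) (ρ.map Prod.fst) :=
    (measurable_fst.measurePreserving ρ).of_semiconj hρ (semiconj_fst_skewProduct R f) hRm
  have hproj : ρ.map Prod.fst = μ :=
    hR _ (Measure.isProbabilityMeasure_map measurable_fst.aemeasurable) hfst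
  exact herg.eq_of_absolutelyContinuous hρ
    (absolutelyContinuous_prod_of_map_fst hν hproj.absolutelyContinuous)

end UniqueErgodicity

section Rigidity

theorem measure_diff_preimage_iterate_le {X : Type*} [MeasurableSpace X] {μ : Measure X}
    {T : X → X} (hT : MeasurePreserving T μ μ) (n : ℕ) (A : Set X) :
    μ (A \ T^[n] ⁻¹' A) ≤ μ ((T^[n] '' A) ∆ A) :=
  calc μ (A \ T^[n] ⁻¹' A)
    _ ≤ μ (T^[n] ⁻¹' ((T^[n] '' A) ∆ A)) :=
        measure_mono fun x hx ↦ Or.inl ⟨mem_image_of_mem _ hx.1, hx.2⟩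
    _ ≤ μ.map T^[n] ((T^[n] '' A) ∆ A) :=
        Measure.le_map_apply (hT.iterate n).measurable.aemeasurable _
    _ = μ ((T^[n] '' A) ∆ A) := by rw [(hT.iterate n).map_eq]

variable {X G : Type*} [AddCommGroup G] [MeasurableSpace X] [MeasurableSpace G]
  {μ : Measure X} {ν : Measure G} {R : X → X} {f : X → G}

theorem not_rigid_skewProduct [MeasurableSingletonClass G] [SFinite ν]
    (hT : MeasurePreserving (skewProduct R f) (μ.prod ν) (μ.prod ν)) (hν : ν {0} ≠ 0) {δ : ℝ≥0∞}
    (hδ : δ ≠ 0) (hf : ∀ n, n ≠ 0 → δ ≤ μ {x | birkhoffSum R f n x ≠ 0}) :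
    ¬ Rigid (skewProduct R f) (μ.prod ν) := by
  rintro ⟨q, hq, hrigid⟩
  have hA := hrigid (univ ×ˢ {0}) (MeasurableSet.univ.prod (measurableSet_singleton 0))
  have hsub (n : ℕ) : {x | birkhoffSum R f n x ≠ 0} ×ˢ {0} ⊆
      (univ ×ˢ {(0 : G)}) \ (skewProduct R f)^[n] ⁻¹' (univ ×ˢ {0}) := by
    rintro ⟨x, s⟩ ⟨hx, rfl : s = 0⟩
    simpa [skewProduct_iterate] using hx
  have hlower : ∀ᶠ k in atTop, δ * ν {0} ≤ μ.prod ν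
      (((skewProduct R f)^[q k] '' (univ ×ˢ {0})) ∆ (univ ×ˢ {0})) := by
    filter_upwards [hq.eventually_ne_atTop 0] with k hk
    calc δ * ν {0}
      _ ≤ μ {x | birkhoffSum R f (q k) x ≠ 0} * ν {0} := by gcongr; exact hf _ hk
      _ = μ.prod ν ({x | birkhoffSum R f (q k) x ≠ 0} ×ˢ {0}) := (Measure.prod_prod _ _).symm
      _ ≤ _ := measure_mono (hsub _)
      _ ≤ _ := measure_diff_preimage_iterate_le hT _ _
  exact mul_ne_zero hδ hν (nonpos_iff_eq_zero.1 (ge_of_tendsto hA hlower))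

end Rigidity

section BirkhoffSum

variable {X G : Type*} [AddCommGroup G] {R S : X → X} {f : X → G}

/- If the orbit segment of `x` meets `{y | f (S y) ≠ f y}` exactly once, then the Birkhoff sums at
`x` and at `S x` differ by one nonzero term, so at least one of them is nonzero. -/
theorem birkhoffSum_ne_zero_or (hRS : Function.Commute S R) {q i : ℕ} (hi : i < q) {x : X}
    (hx : ∀ j < q, f (S (R^[j] x)) ≠ f (R^[j] x) ↔ j = i) :
    birkhoffSum R f q x ≠ 0 ∨ birkhoffSum R f q (S x) ≠ 0 := by
  have hterm (j : ℕ) : f (R^[j] (S x)) = f (S (R^[j] x)) :=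
    congrArg f ((hRS.iterate_right j).eq x).symm
  have hdiff : birkhoffSum R f q (S x) - birkhoffSum R f q x =
      f (S (R^[i] x)) - f (R^[i] x) := by
    simp only [birkhoffSum, hterm, ← Finset.sum_sub_distrib]
    refine Finset.sum_eq_single_of_mem i (Finset.mem_range.2 hi) fun j hj hji ↦ ?_
    exact sub_eq_zero.2 (not_not.1 (mt (hx j (Finset.mem_range.1 hj)).1 hji))
  by_contra! h
  rw [h.1, h.2, sub_zero] at hdiff
  exact (hx i hi).2 rfl (sub_eq_zero.1 hdiff.symm)

theorem mul_measure_le_two_mul_measure_birkhoffSum_ne_zero [MeasurableSpace X]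
    {μ : Measure X} (hR : MeasurePreserving R μ μ) (hS : MeasurePreserving S μ μ)
    (hRS : Function.Commute S R) {q : ℕ}
    (hV : MeasurableSet {x | f (S x) ≠ f x})
    (hdisj : ∀ x, ∀ i < q, ∀ j < q, f (S (R^[i] x)) ≠ f (R^[i] x) →
      f (S (R^[j] x)) ≠ f (R^[j] x) → i = j) :
    q * μ {x | f (S x) ≠ f x} ≤ 2 * μ {x | birkhoffSum R f q x ≠ 0} := by
  set V := {x | f (S x) ≠ f x}
  set B := {x | birkhoffSum R f q x ≠ 0}
  have hVi (i : ℕ) : MeasurableSet (R^[i] ⁻¹' V) := (hR.iterate i).measurable hV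
  have hpair : PairwiseDisjoint (Finset.range q : Set ℕ) fun i ↦ R^[i] ⁻¹' V := by
    intro i hi j hj hij
    refine Set.disjoint_left.2 fun x hxi hxj ↦ hij ?_
    exact hdisj x i (by simpa using hi) j (by simpa using hj) hxi hxj
  have hsub : ⋃ i ∈ Finset.range q, R^[i] ⁻¹' V ⊆ B ∪ S ⁻¹' B := by
    intro x hx
    obtain ⟨i, hi, hxi⟩ := mem_iUnion₂.1 hx
    rw [Finset.mem_range] at hi
    exact birkhoffSum_ne_zero_or hRS hi fun j hj ↦
      ⟨fun hxj ↦ hdisj x j hj i hi hxj hxi, by rintro rfl; exact hxi⟩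
  calc q * μ V
    _ = ∑ i ∈ Finset.range q, μ (R^[i] ⁻¹' V) := by
        simp [(hR.iterate _).measure_preimage hV.nullMeasurableSet]
    _ = μ (⋃ i ∈ Finset.range q, R^[i] ⁻¹' V) :=
        (measure_biUnion_finset hpair fun i _ ↦ hVi i).symm
    _ ≤ μ B + μ (S ⁻¹' B) := (measure_mono hsub).trans (measure_union_le _ _)
    _ ≤ μ B + μ.map S B :=
        add_le_add_right (Measure.le_map_apply hS.measurable.aemeasurable B) _
    _ = 2 * μ B := by rw [hS.map_eq, two_mul]

end BirkhoffSum

theorem one_le_mul_measure_comp_ne {X Y : Type*} [MeasurableSpace X] {μ : Measure X}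
    [IsProbabilityMeasure μ] {S : X → X} {f : X → Y} (hS : MeasurePreserving S μ μ)
    (hV : MeasurableSet {x | f (S x) ≠ f x}) {m : ℕ} (hm : ∀ x, f (S^[m] x) ≠ f x) :
    1 ≤ m * μ {x | f (S x) ≠ f x} := by
  have hcover : univ ⊆ ⋃ i ∈ Finset.range m, S^[i] ⁻¹' {x | f (S x) ≠ f x} := by
    intro x _
    by_contra hx
    have hstep (i : ℕ) (hi : i < m) : f (S^[i + 1] x) = f (S^[i] x) := by
      rw [Function.iterate_succ_apply']
      simpa using fun h ↦ hx (mem_biUnion (Finset.mem_coe.2 (Finset.mem_range.2 hi)) h)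
    have hconst (i : ℕ) (hi : i ≤ m) : f (S^[i] x) = f x := by
      induction i with
      | zero => rfl
      | succ i ih => rw [hstep i hi, ih (by lia)]
    exact hm x (hconst m le_rfl)
  calc 1
    _ = μ univ := measure_univ.symm
    _ ≤ ∑ i ∈ Finset.range m, μ (S^[i] ⁻¹' {x | f (S x) ≠ f x}) :=
        (measure_mono hcover).trans (measure_biUnion_finset_le _ _)
    _ = m * μ {x | f (S x) ≠ f x} := by
        simp only [(hS.iterate _).measure_preimage hV.nullMeasurableSet, Finset.sum_const,
          Finset.card_range, nsmul_eq_mul]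

section InvariantMeasure

variable {G : Type*} [TopologicalSpace G] [FirstCountableTopology G] [MeasurableSpace G]
  [BorelSpace G] {m : Measure G} [IsFiniteMeasure m]

theorem isAddLeftInvariant_of_dense [Add G] [ContinuousAdd G] [HasOuterApproxClosed G] {D : Set G}
    (hD : Dense D) (hm : ∀ g ∈ D, m.map (g + ·) = m) : m.IsAddLeftInvariant := by
  refine ⟨fun g ↦ ext_of_forall_integral_eq_of_IsFiniteMeasure fun φ ↦ ?_⟩
  have hcont : Continuous fun a : G ↦ ∫ x, φ (a + x) ∂m :=
    continuous_of_dominated (bound := fun _ ↦ ‖φ‖)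
      (fun a ↦ (φ.continuous.comp (continuous_const_add a)).aestronglyMeasurable)
      (fun a ↦ ae_of_all _ fun x ↦ φ.norm_coe_le_norm _) (integrable_const _)
      (ae_of_all _ fun x ↦ φ.continuous.comp (continuous_add_const x))
  have hmap (a : G) : ∫ x, φ x ∂m.map (a + ·) = ∫ x, φ (a + x) ∂m :=
    integral_map (continuous_const_add a).measurable.aemeasurable
      φ.continuous.aestronglyMeasurable
  rw [hmap]
  refine congrFun (hcont.ext_on hD (continuous_const (y := ∫ x, φ x ∂m)) fun a ha ↦ ?_) g
  exact (hmap a).symm.trans (by rw [hm a ha])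

theorem eq_of_measurePreserving_add_right [AddCommGroup G] [IsTopologicalAddGroup G]
    [CompactSpace G] [HasOuterApproxClosed G] {μ : Measure G} [IsProbabilityMeasure μ]
    [μ.IsAddHaarMeasure] [IsProbabilityMeasure m] {g : G}
    (hg : DenseRange (fun n : ℕ ↦ n • g)) (hm : MeasurePreserving (· + g) m m) : m = μ := by
  have : m.IsAddLeftInvariant := isAddLeftInvariant_of_dense hg <| by
    rintro _ ⟨n, rfl⟩
    have hn := (hm.iterate n).map_eq
    rw [add_right_iterate] at hn
    simpa only [add_comm] using hn
  have : m.IsAddHaarMeasure := Measure.isAddHaarMeasure_of_isCompact_nonempty_interior m univ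
    isCompact_univ (by simp) (by simp) (by simp)
  exact Measure.isAddHaarMeasure_eq_of_isProbabilityMeasure m μ

end InvariantMeasure

section Rotation

variable {α : ℝ}

theorem denseRange_nsmul_coe (hα : Irrational α) :
    DenseRange (fun n : ℕ ↦ n • (α : UnitAddCircle)) := by
  rw [← denseRange_zsmul_iff_nsmul, AddCircle.denseRange_zsmul_coe_iff]
  simpa using hα

instance isProbabilityMeasure_volume : IsProbabilityMeasure (volume : Measure UnitAddCircle) :=
  ⟨UnitAddCircle.measure_univ⟩

theorem rotMap_iterate_apply (α : ℝ) (n : ℕ) (x : UnitAddCircle) :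
    (rotMap α)^[n] x = x + n • (α : UnitAddCircle) :=
  congrFun (add_right_iterate _ _) x

theorem measurePreserving_rotMap (α : ℝ) : MeasurePreserving (rotMap α) :=
  measurePreserving_add_right volume _

theorem ergodic_iterate_rotMap (hα : Irrational α) {n : ℕ} (hn : n ≠ 0) :
    Ergodic (rotMap α)^[n] := by
  have hiter : (rotMap α)^[n] = (· + ((n * α : ℝ) : UnitAddCircle)) :=
    funext fun x ↦ by simp [rotMap_iterate_apply]
  rw [hiter, AddCircle.ergodic_add_right, ← AddCircle.denseRange_zsmul_iff,
    AddCircle.denseRange_zsmul_coe_iff]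
  simpa using hα.natCast_mul hn

theorem eq_volume_of_measurePreserving_rotMap (hα : Irrational α) (m : Measure UnitAddCircle)
    [IsProbabilityMeasure m] (hm : MeasurePreserving (rotMap α) m m) : m = volume :=
  eq_of_measurePreserving_add_right (denseRange_nsmul_coe hα) hm

end Rotation

section CircleRepr

theorem circleRepr_coe (a : ℝ) : circleRepr (a : UnitAddCircle) = Int.fract a := by
  simp [circleRepr, AddCircle.coe_equivIco_mk_apply]

theorem coe_circleRepr (x : UnitAddCircle) : (circleRepr x : UnitAddCircle) = x :=
  (AddCircle.equivIco 1 0).symm_apply_apply x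

theorem circleRepr_nonneg (x : UnitAddCircle) : 0 ≤ circleRepr x :=
  (AddCircle.equivIco 1 0 x).2.1

theorem circleRepr_lt_one (x : UnitAddCircle) : circleRepr x < 1 :=
  (AddCircle.equivIco 1 0 x).2.2.trans_eq (zero_add 1)

theorem measurable_circleRepr : Measurable circleRepr :=
  measurable_subtype_coe.comp (AddCircle.measurableEquivIco 1 0).measurable

theorem circleRepr_add_coe (x : UnitAddCircle) (a : ℝ) :
    circleRepr (x + a) = Int.fract (circleRepr x + a) := by
  rw [← circleRepr_coe, AddCircle.coe_add, coe_circleRepr]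

theorem norm_coe_le_abs_sub_intCast (a : ℝ) (n : ℤ) : ‖(a : UnitAddCircle)‖ ≤ |a - n| := by
  rw [UnitAddCircle.norm_eq]
  exact round_le a n

theorem norm_le_circleRepr (x : UnitAddCircle) : ‖x‖ ≤ circleRepr x := by
  simpa [coe_circleRepr, abs_of_nonneg (circleRepr_nonneg x)] using
    norm_coe_le_abs_sub_intCast (circleRepr x) 0

end CircleRepr

section BadlyApproximable

/-- `α` is badly approximable: `n * ‖n α‖` is bounded away from `0`, where `‖·‖` is the distance
to the nearest integer. Equivalently, `α` has bounded partial quotients. -/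
def BadlyApproximable (α : ℝ) : Prop :=
  ∃ c > 0, ∀ n : ℕ, n ≠ 0 → c ≤ n * ‖n • (α : UnitAddCircle)‖

variable {α : ℝ}

theorem BadlyApproximable.irrational (hα : BadlyApproximable α) : Irrational α := by
  rintro ⟨a, rfl⟩
  obtain ⟨c, hc, hbound⟩ := hα
  have hzero : a.den • ((a : ℝ) : UnitAddCircle) = 0 := by
    rw [← AddCircle.coe_nsmul, AddCircle.coe_eq_zero_iff]
    exact ⟨a.num, by rw [zsmul_one, nsmul_eq_mul]; exact_mod_cast (Rat.den_mul_eq_num a).symm⟩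
  have hle := hbound a.den a.den_ne_zero
  rw [hzero, norm_zero, mul_zero] at hle
  linarith

open Polynomial in
theorem badlyApproximable_of_root (hα : Irrational α) {f : ℤ[X]} (hdeg : f.natDegree = 2)
    (hroot : aeval α f = 0) : BadlyApproximable α := by
  have hf : f ≠ 0 := by
    rintro rfl
    simp at hdeg
  obtain ⟨A, hA, hbound⟩ := Liouville.exists_pos_real_of_irrational_root hα hf
    ((eval_map_algebraMap f α).trans hroot)
  refine ⟨A⁻¹, inv_pos.2 hA, fun n hn ↦ ?_⟩
  obtain ⟨b, rfl⟩ := Nat.exists_eq_succ_of_ne_zero hn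
  have hb : (0 : ℝ) < b + 1 := by positivity
  have hnorm : ‖(b + 1) • (α : UnitAddCircle)‖ =
      (b + 1) * |α - round ((b + 1) * α) / (b + 1)| := by
    rw [← AddCircle.coe_nsmul, UnitAddCircle.norm_eq, nsmul_eq_mul, Nat.cast_succ,
      ← abs_of_pos hb, ← abs_mul, abs_of_pos hb, mul_sub, mul_div_cancel₀ _ hb.ne']
  have h := hbound (round ((b + 1) * α)) b
  rw [hdeg] at h
  rw [inv_le_iff_one_le_mul₀ hA, Nat.succ_eq_add_one, hnorm]
  calc (1 : ℝ)
    _ ≤ _ := h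
    _ = _ := by push_cast; ring

open Polynomial in
theorem badlyApproximable_sqrt_two_sub_one : BadlyApproximable (√2 - 1) := by
  refine badlyApproximable_of_root (f := X ^ 2 + 2 * X - 1)
    (by simpa using irrational_sqrt_two.sub_intCast 1) (by compute_degree!) ?_
  have hsq : √2 ^ 2 = 2 := Real.sq_sqrt zero_le_two
  simp only [map_sub, map_add, map_mul, map_pow, aeval_X, map_one, map_ofNat]
  linear_combination hsq

end BadlyApproximable

section HalfArc

/-- The indicator of the half-open half-circle `[b, b + 1/2)`, with values in `Fin 2 = ℤ/2ℤ`. -/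
noncomputable def halfArcIndicator (b : ℝ) (x : UnitAddCircle) : Fin 2 :=
  if circleRepr (x - b) < 1 / 2 then 1 else 0

variable {α : ℝ} (b : ℝ)

theorem measurable_halfArcIndicator : Measurable (halfArcIndicator b) :=
  Measurable.ite (measurableSet_lt (measurable_circleRepr.comp (measurable_sub_const _))
    measurable_const) measurable_const measurable_const

theorem halfArcIndicator_add_half (x : UnitAddCircle) :
    halfArcIndicator b (x + (1 / 2 : ℝ)) = halfArcIndicator b x + 1 := by
  have h0 := circleRepr_nonneg (x - b)
  have h1 := circleRepr_lt_one (x - b)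
  have hadd : x + ((1 / 2 : ℝ) : UnitAddCircle) - b = x - b + (1 / 2 : ℝ) := by abel
  rw [halfArcIndicator, halfArcIndicator, hadd, circleRepr_add_coe]
  by_cases h : circleRepr (x - b) < 1 / 2
  · have hfract : Int.fract (circleRepr (x - b) + 1 / 2) = circleRepr (x - b) + 1 / 2 :=
      Int.fract_eq_self.2 ⟨by linarith, by linarith⟩
    rw [if_pos h, if_neg (by linarith)]
    rfl
  · have hfract : Int.fract (circleRepr (x - b) + 1 / 2) = circleRepr (x - b) - 1 / 2 :=
      Int.fract_eq_iff.2 ⟨by linarith, by linarith, 1, by push_cast; ring⟩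
    rw [if_neg h, if_pos (by linarith)]
    rfl

/- The indicator jumps at `b` and at `b + 1/2`, the two solutions of `2 y = 2 b`. -/
theorem norm_two_nsmul_sub_le_of_halfArcIndicator_ne {t : ℝ} (ht : 0 ≤ t) {y : UnitAddCircle}
    (hy : halfArcIndicator b (y + t) ≠ halfArcIndicator b y) : ‖2 • (y - b)‖ ≤ 2 * t := by
  set z := circleRepr (y - b) with hz
  have hz1 : z < 1 := circleRepr_lt_one _
  have hz0 : 0 ≤ z := circleRepr_nonneg _
  have hzt : circleRepr (y + t - b) = Int.fract (z + t) := by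
    rw [hz, ← circleRepr_add_coe, sub_add_eq_add_sub]
  have hnorm (n : ℤ) : ‖2 • (y - b)‖ ≤ |2 * z - n| := by
    rw [← coe_circleRepr (y - b), ← AddCircle.coe_nsmul, nsmul_eq_mul]
    exact norm_coe_le_abs_sub_intCast _ n
  rw [halfArcIndicator, halfArcIndicator, hzt, ← hz] at hy
  rcases lt_or_ge z (1 / 2) with hlt | hge
  · have hjump : 1 / 2 ≤ Int.fract (z + t) := by
      by_contra! h
      exact hy (by rw [if_pos h, if_pos hlt])
    have hfract : Int.fract (z + t) ≤ z + t := by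
      rw [← Int.self_sub_floor, sub_le_self_iff]
      exact_mod_cast Int.floor_nonneg.2 (add_nonneg hz0 ht)
    refine (hnorm 1).trans (abs_le.2 ⟨?_, ?_⟩) <;> push_cast <;> linarith
  · have hwrap : 1 ≤ z + t := by
      by_contra! h
      rw [Int.fract_eq_self.2 ⟨add_nonneg hz0 ht, h⟩] at hy
      exact hy (by rw [if_neg (by linarith), if_neg (by linarith)])
    refine (hnorm 2).trans (abs_le.2 ⟨?_, ?_⟩) <;> push_cast <;> linarith

theorem eq_of_halfArcIndicator_iterate_ne {c : ℝ} {q : ℕ}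
    (hα : ∀ n : ℕ, n ≠ 0 → c ≤ n * ‖n • (α : UnitAddCircle)‖) {t : ℝ} (ht : 0 ≤ t)
    (hqt : 8 * q * t < c) {x : UnitAddCircle} {i j : ℕ} (hi : i < q) (hj : j < q)
    (hxi : halfArcIndicator b (rotMap t ((rotMap α)^[i] x)) ≠
      halfArcIndicator b ((rotMap α)^[i] x))
    (hxj : halfArcIndicator b (rotMap t ((rotMap α)^[j] x)) ≠
      halfArcIndicator b ((rotMap α)^[j] x)) : i = j := by
  wlog hij : i ≤ j generalizing i j
  · exact (this hj hi hxj hxi (le_of_not_ge hij)).symm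
  by_contra hne
  have hdiff : (2 * (j - i)) • (α : UnitAddCircle) =
      2 • ((rotMap α)^[j] x - b) - 2 • ((rotMap α)^[i] x - b) := by
    rw [rotMap_iterate_apply, rotMap_iterate_apply, mul_nsmul', sub_nsmul _ hij]
    abel
  have hnorm : ‖(2 * (j - i)) • (α : UnitAddCircle)‖ ≤ 4 * t := by
    rw [hdiff]
    linarith [norm_sub_le (2 • ((rotMap α)^[j] x - (b : UnitAddCircle)))
      (2 • ((rotMap α)^[i] x - (b : UnitAddCircle))),
      norm_two_nsmul_sub_le_of_halfArcIndicator_ne b ht hxi,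
      norm_two_nsmul_sub_le_of_halfArcIndicator_ne b ht hxj]
  have hle : ((2 * (j - i) : ℕ) : ℝ) ≤ 2 * q := by
    exact_mod_cast (by lia : 2 * (j - i) ≤ 2 * q)
  have := hα (2 * (j - i)) (by lia)
  have : ((2 * (j - i) : ℕ) : ℝ) * ‖(2 * (j - i)) • (α : UnitAddCircle)‖ ≤ 2 * q * (4 * t) :=
    mul_le_mul hle hnorm (norm_nonneg _) (by positivity)
  linarith

/- Translating by `t = 1 / (2 M q)` changes the indicator on a set of measure at least
`1 / (M q)`, whose first `q` preimages under the rotation are disjoint once `4 / M < c`. -/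
theorem one_le_mul_volume_birkhoffSum_halfArcIndicator_ne_zero {c : ℝ}
    (hα : ∀ n : ℕ, n ≠ 0 → c ≤ n * ‖n • (α : UnitAddCircle)‖) {M q : ℕ} (hM0 : M ≠ 0)
    (hM : 4 / M < c) (hq : q ≠ 0) :
    1 ≤ 2 * M * volume {x | birkhoffSum (rotMap α) (halfArcIndicator b) q x ≠ 0} := by
  set t : ℝ := 1 / (2 * M * q) with ht
  set V := {x | halfArcIndicator b (rotMap t x) ≠ halfArcIndicator b x}
  set B := {x | birkhoffSum (rotMap α) (halfArcIndicator b) q x ≠ 0}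
  have hV : MeasurableSet V :=
    (measurableSet_eq_fun ((measurable_halfArcIndicator b).comp
      (measurePreserving_rotMap t).measurable) (measurable_halfArcIndicator b)).compl
  have hflip (x : UnitAddCircle) :
      halfArcIndicator b ((rotMap t)^[M * q] x) ≠ halfArcIndicator b x := by
    have htotal : (M * q) • t = 1 / 2 := by
      rw [nsmul_eq_mul, ht]
      push_cast
      field_simp
    rw [rotMap_iterate_apply, ← AddCircle.coe_nsmul, htotal, halfArcIndicator_add_half]
    exact add_ne_left.2 one_ne_zero
  have hlower : 1 ≤ (M * q : ℕ) * volume V :=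
    one_le_mul_measure_comp_ne (measurePreserving_rotMap t) hV hflip
  have hqt : 8 * q * t < c := by
    have : 8 * q * t = 4 / M := by rw [ht]; field_simp; norm_num
    rwa [this]
  have hupper : q * volume V ≤ 2 * volume B :=
    mul_measure_le_two_mul_measure_birkhoffSum_ne_zero (measurePreserving_rotMap α)
      (measurePreserving_rotMap t) (fun x ↦ add_right_comm _ _ _) hV
      fun x i hi j hj ↦ eq_of_halfArcIndicator_iterate_ne b hα (by positivity) hqt hi hj
  calc (1 : ℝ≥0∞)
    _ ≤ M * (q * volume V) := by simpa only [Nat.cast_mul, mul_assoc] using hlower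
    _ ≤ M * (2 * volume B) := by gcongr
    _ = 2 * M * volume B := by ring

theorem exists_le_volume_birkhoffSum_halfArcIndicator_ne_zero (hα : BadlyApproximable α) :
    ∃ δ : ℝ≥0∞, δ ≠ 0 ∧
      ∀ q, q ≠ 0 → δ ≤ volume {x | birkhoffSum (rotMap α) (halfArcIndicator b) q x ≠ 0} := by
  obtain ⟨c, hc, hbound⟩ := hα
  obtain ⟨M, hM⟩ := exists_nat_gt (4 / c)
  have hM0 : (0 : ℝ) < M := (by positivity : 0 < 4 / c).trans hM
  refine ⟨(2 * M)⁻¹, ENNReal.inv_ne_zero.2 (by finiteness), fun q hq ↦ ?_⟩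
  rw [ENNReal.inv_le_iff_le_mul (fun h ↦ absurd h (measure_ne_top _ _))
    fun h ↦ absurd h (by finiteness)]
  exact one_le_mul_volume_birkhoffSum_halfArcIndicator_ne_zero b hbound
    (by exact_mod_cast hM0.ne') ((div_lt_comm₀ hM0 hc).2 hM) hq

end HalfArc

section Coding

theorem atomIdx_pair {b₁ b₂ : ℝ} (hb : b₁ ≤ b₂) (a : ℝ) :
    atomIdx ![b₁, b₂] a = if a < b₁ then 0 else if a < b₂ then 1 else 2 := by
  rw [Fin.ext_iff]
  change (Finset.univ.filter fun i ↦ ![b₁, b₂] i ≤ a).card = _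
  rw [Finset.card_filter, Fin.sum_univ_two]
  simp only [Matrix.cons_val_zero, Matrix.cons_val_one]
  grind

theorem halfArcIndicator_of_le_half {b : ℝ} (hb0 : 0 ≤ b) (hb : b ≤ 1 / 2) (x : UnitAddCircle) :
    halfArcIndicator b x = if b ≤ circleRepr x ∧ circleRepr x < b + 1 / 2 then 1 else 0 := by
  have h0 := circleRepr_nonneg x
  have h1 := circleRepr_lt_one x
  have hsub : circleRepr (x - b) = Int.fract (circleRepr x - b) := by
    rw [sub_eq_add_neg, ← AddCircle.coe_neg, circleRepr_add_coe, sub_eq_add_neg]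
  rw [halfArcIndicator, hsub]
  congr 1
  rcases lt_or_ge (circleRepr x) b with hlt | hge
  · have hfract : Int.fract (circleRepr x - b) = circleRepr x - b + 1 :=
      Int.fract_eq_iff.2 ⟨by linarith, by linarith, -1, by push_cast; ring⟩
    rw [hfract, eq_iff_iff]
    exact ⟨fun h ↦ by linarith, fun h ↦ by linarith [h.1]⟩
  · rw [Int.fract_eq_self.2 ⟨by linarith, by linarith⟩, eq_iff_iff]
    exact ⟨fun h ↦ ⟨hge, by linarith⟩, fun h ↦ by linarith [h.2]⟩

theorem VST_pair_eq_skewProduct (α : ℝ) {b : ℝ} (hb0 : 0 ≤ b) (hb : b ≤ 1 / 2) :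
    VST α ![b, b + 1 / 2] ![(1 : Equiv.Perm (Fin 2)), Equiv.swap 0 1, 1] =
      skewProduct (rotMap α) (halfArcIndicator b) := by
  funext ⟨x, s⟩
  refine Prod.ext rfl ?_
  change (![(1 : Equiv.Perm (Fin 2)), Equiv.swap 0 1, 1]
    (atomIdx ![b, b + 1 / 2] (circleRepr x))) s = s + halfArcIndicator b x
  rw [atomIdx_pair (by linarith), halfArcIndicator_of_le_half hb0 hb]
  by_cases h₁ : circleRepr x < b
  · rw [if_pos h₁, if_neg fun h ↦ h.1.not_gt h₁]
    exact (add_zero s).symm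
  by_cases h₂ : circleRepr x < b + 1 / 2
  · rw [if_neg h₁, if_pos h₂, if_pos ⟨not_lt.1 h₁, h₂⟩]
    revert s
    decide
  · rw [if_neg h₁, if_neg h₂, if_neg fun h ↦ h₂ h.2]
    exact (add_zero s).symm

theorem vsCode_fst_eq_zero_iff {r d : ℕ} {β : Fin (r + 1) → ℝ} (hβ : Monotone β)
    (p : UnitAddCircle × Fin d) : (vsCode β p).1 = 0 ↔ circleRepr p.1 < β 0 := by
  change atomIdx β (circleRepr p.1) = 0 ↔ _
  rw [Fin.ext_iff]
  change (Finset.univ.filter fun i ↦ β i ≤ circleRepr p.1).card = 0 ↔ _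
  rw [Finset.card_eq_zero, Finset.filter_eq_empty_iff]
  exact ⟨fun h ↦ not_le.1 (h (Finset.mem_univ 0)),
    fun h i _ ↦ not_le.2 (h.trans_le (hβ (Fin.zero_le i)))⟩

theorem VST_iterate_fst {r d : ℕ} (α : ℝ) (β : Fin r → ℝ) (σ : Fin (r + 1) → Equiv.Perm (Fin d))
    (n : ℕ) (p : UnitAddCircle × Fin d) :
    ((VST α β σ)^[n] p).1 = p.1 + n • (α : UnitAddCircle) := by
  have hsemi : Function.Semiconj Prod.fst (VST α β σ) (rotMap α) := fun _ ↦ rfl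
  rw [(hsemi.iterate_right n).eq, rotMap_iterate_apply]

theorem wordAt_mem_LVST {r d : ℕ} (α : ℝ) (β : Fin r → ℝ) (σ : Fin (r + 1) → Equiv.Perm (Fin d))
    (p : UnitAddCircle × Fin d) (i m : ℕ) :
    wordAt (fun n ↦ vsCode β ((VST α β σ)^[n] p)) i m ∈ LVST α β σ := by
  refine ⟨(VST α β σ)^[i] p, fun j ↦ (List.get_ofFn _ j).trans ?_⟩
  rw [← Function.iterate_add_apply, add_comm (j : ℕ) i]
  rfl

theorem exists_eq_of_isFactor_wordAt {A : Type*} {x y : ℕ → A} {i j m n : ℕ}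
    (h : IsFactor (wordAt x i m) (wordAt y j n)) :
    ∃ k, k + m ≤ n ∧ ∀ l < m, y (j + k + l) = x (i + l) := by
  obtain ⟨u, u', huu'⟩ := h
  have hlen : u.length + m ≤ n := by
    have := congrArg List.length huu'
    simp only [wordAt, List.length_ofFn, List.length_append] at this
    lia
  refine ⟨u.length, hlen, fun l hl ↦ ?_⟩
  have hl' : l < (List.ofFn fun j : Fin m ↦ x (i + j)).length := by rwa [List.length_ofFn]
  have hget := congrArg (·[u.length + l]?) huu'
  simp only [wordAt, List.append_assoc, List.getElem?_append_right le_self_add,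
    Nat.add_sub_cancel_left, List.getElem?_ofFn, dif_pos (show u.length + l < n by lia),
    List.getElem?_append_left hl', dif_pos hl, Option.some.injEq] at hget
  rwa [add_assoc]

theorem circleRepr_lt_sub_of_add_coe_lt {b c : ℝ} (hc : 0 ≤ c) (hbc : b + c ≤ 1)
    {x : UnitAddCircle} (hx : circleRepr x < b) (hxc : circleRepr (x + c) < b) :
    circleRepr x < b - c := by
  rw [circleRepr_add_coe,
    Int.fract_eq_self.2 ⟨add_nonneg (circleRepr_nonneg x) hc, by linarith⟩] at hxc
  linarith

/-- `β` is well approximable from below by the orbit of `α`: it is the limit from below of points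
`k α + p` at distance `o(1 / (k + 1))`. -/
def WellApproximableFromBelow (α β : ℝ) : Prop :=
  ∀ ε > 0, ∃ k : ℕ, ∃ p : ℤ, 0 < β - (k * α + p) ∧ (k + 1) * (β - (k * α + p)) < ε

theorem exists_return_of_linearlyRecurrent_LVST {r d : ℕ} [NeZero d] {α : ℝ}
    {β : Fin (r + 1) → ℝ} {σ : Fin (r + 1 + 1) → Equiv.Perm (Fin d)} (hβ : Monotone β)
    (hβ0 : 0 < β 0) (hrec : LinearlyRecurrent (LVST α β σ)) :
    ∃ K : ℕ, K ≠ 0 ∧ ∀ k : ℕ, circleRepr (k • (α : UnitAddCircle)) < β 0 →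
      ∃ n : ℕ, n ≠ 0 ∧ n ≤ K * (k + 1) ∧ circleRepr (n • (α : UnitAddCircle)) < β 0 ∧
        circleRepr ((n + k) • (α : UnitAddCircle)) < β 0 := by
  obtain ⟨K, hK, hfactor⟩ := hrec
  refine ⟨K, Nat.one_le_iff_ne_zero.1 hK, fun k hk ↦ ?_⟩
  let x : ℕ → Fin (r + 1 + 1) × Fin d := fun n ↦ vsCode β ((VST α β σ)^[n] (0, 0))
  have hletter (n : ℕ) : (x n).1 = 0 ↔ circleRepr (n • (α : UnitAddCircle)) < β 0 := by
    rw [vsCode_fst_eq_zero_iff hβ, VST_iterate_fst, zero_add]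
  have hword (i m : ℕ) : wordAt x i m ∈ LVST α β σ := wordAt_mem_LVST α β σ (0, 0) i m
  have hlen : K * (wordAt x 0 (k + 1)).length ≤ (wordAt x 1 (K * (k + 1))).length := by
    simp only [wordAt, List.length_ofFn, le_refl]
  obtain ⟨n, hn, hxn⟩ := exists_eq_of_isFactor_wordAt (hfactor _ (hword _ _) _ (hword _ _) hlen)
  refine ⟨1 + n, by lia, by lia, ?_, ?_⟩
  · have h0 : circleRepr (0 • (α : UnitAddCircle)) = 0 := by
      rw [zero_smul, ← AddCircle.coe_zero, circleRepr_coe, Int.fract_zero]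
    rw [← hletter, ← add_zero (1 + n), hxn 0 k.succ_pos, hletter, h0]
    exact hβ0
  · rwa [← hletter, hxn k k.lt_succ_self, hletter, zero_add]

/- If `a = k α + p` is just below `β₀`, the orbit of `0` visits `[0, β₀)` at the times `0` and `k`.
A later occurrence of this pattern at time `n` forces `n α` modulo `1` into `[0, β₀ - a)`. -/
theorem not_linearlyRecurrent_LVST {r d : ℕ} [NeZero d] {α : ℝ} {β : Fin (r + 1) → ℝ}
    (σ : Fin (r + 1 + 1) → Equiv.Perm (Fin d)) (hα : BadlyApproximable α) (hβ : Monotone β)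
    (hβ0 : 0 < β 0) (hβ1 : β 0 ≤ 1 / 2) (happrox : WellApproximableFromBelow α (β 0)) :
    ¬ LinearlyRecurrent (LVST α β σ) := by
  intro hrec
  obtain ⟨K, hK, hreturn⟩ := exists_return_of_linearlyRecurrent_LVST hβ hβ0 hrec
  obtain ⟨c, hc, hbad⟩ := hα
  have hK0 : (0 : ℝ) < K := by exact_mod_cast hK.bot_lt
  obtain ⟨k, p, hpos, hclose⟩ := happrox (min (β 0) (c / K)) (by positivity)
  obtain ⟨hcloseβ, hcloseK⟩ := lt_min_iff.1 hclose
  set a : ℝ := k * α + p with ha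
  have ha0 : 0 ≤ a := by nlinarith [k.cast_nonneg (α := ℝ)]
  have hp : ((p : ℝ) : UnitAddCircle) = 0 := (AddCircle.coe_eq_zero_iff 1).2 ⟨p, zsmul_one p⟩
  have hka : k • (α : UnitAddCircle) = (a : UnitAddCircle) := by
    rw [ha, ← AddCircle.coe_nsmul, nsmul_eq_mul, AddCircle.coe_add, hp, add_zero]
  have hk : circleRepr (k • (α : UnitAddCircle)) < β 0 := by
    rw [hka, circleRepr_coe, Int.fract_eq_self.2 ⟨ha0, by linarith⟩]
    linarith
  obtain ⟨n, hn, hnK, hstart, hend⟩ := hreturn k hk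
  rw [add_smul, hka] at hend
  have hnear := circleRepr_lt_sub_of_add_coe_lt ha0 (by linarith) hstart hend
  refine (hbad n hn).not_gt ?_
  calc (n : ℝ) * ‖n • (α : UnitAddCircle)‖
    _ ≤ K * (k + 1) * (β 0 - a) :=
      mul_le_mul (by exact_mod_cast hnK) ((norm_le_circleRepr _).trans hnear.le) (norm_nonneg _)
        (by positivity)
    _ = (k + 1) * (β 0 - a) * K := by ring
    _ < c := (lt_div_iff₀ hK0).1 hcloseK

end Coding

section Generic

variable {α : ℝ}

theorem exists_natCast_mul_add_intCast_mem (hα : Irrational α) {U : Set ℝ} (hU : IsOpen U)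
    (hne : U.Nonempty) : ∃ k : ℕ, ∃ p : ℤ, k * α + p ∈ U := by
  obtain ⟨k, v, hv, hvk⟩ := (denseRange_nsmul_coe hα).exists_mem_open
    (QuotientAddGroup.isOpenMap_coe U hU) (hne.image _)
  obtain ⟨p, hp⟩ : ∃ p : ℤ, p • (1 : ℝ) = v - k * α := by
    rw [← AddCircle.coe_eq_zero_iff, AddCircle.coe_sub, ← nsmul_eq_mul, AddCircle.coe_nsmul,
      sub_eq_zero]
    exact hvk
  rw [zsmul_one] at hp
  exact ⟨k, p, by rwa [hp, add_sub_cancel]⟩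

theorem eventually_residual_wellApproximableFromBelow (hα : Irrational α) :
    ∀ᶠ β in residual ℝ, WellApproximableFromBelow α β := by
  have hscale (n : ℕ) : ∀ᶠ β in residual ℝ, ∃ k : ℕ, ∃ p : ℤ,
      0 < β - (k * α + p) ∧ (k + 1) * (β - (k * α + p)) < 1 / (n + 1) := by
    refine residual_of_dense_open ?_ ?_
    · simp only [ofPred_exists, ofPred_and]
      exact isOpen_iUnion fun k ↦ isOpen_iUnion fun p ↦
        (isOpen_lt (by fun_prop) (by fun_prop)).inter (isOpen_lt (by fun_prop) (by fun_prop))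
    · refine dense_iff_inter_open.2 fun U hU hne ↦ ?_
      obtain ⟨k, p, hmem⟩ := exists_natCast_mul_add_intCast_mem hα hU hne
      have hwidth : (0 : ℝ) < 1 / (n + 1) / (k + 1) := by positivity
      obtain ⟨β, hβU, hβ⟩ := Filter.nonempty_of_mem <|
        inter_mem (mem_nhdsWithin_of_mem_nhds (hU.mem_nhds hmem))
          (Ioo_mem_nhdsGT (lt_add_of_pos_right (k * α + p) hwidth))
      refine ⟨β, hβU, k, p, sub_pos.2 hβ.1, ?_⟩
      rw [mul_comm, ← lt_div_iff₀ k.cast_add_one_pos]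
      exact sub_left_lt_of_lt_add hβ.2
  filter_upwards [eventually_countable_forall.2 hscale] with β hβ ε hε
  obtain ⟨n, hn⟩ := exists_nat_one_div_lt hε
  obtain ⟨k, p, hpos, hlt⟩ := hβ n
  exact ⟨k, p, hpos, hlt.trans hn⟩

theorem countable_ZPlusAlphaZ (α : ℝ) : (ZPlusAlphaZ α).Countable := by
  refine (countable_range fun mk : ℤ × ℤ ↦ (mk.1 : ℝ) + mk.2 * α).mono ?_
  rintro _ ⟨m, k, rfl⟩
  exact ⟨(m, k), rfl⟩

theorem one_sub_mem_ZPlusAlphaZ (α : ℝ) : 1 - α ∈ ZPlusAlphaZ α :=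
  ⟨1, -1, by push_cast; ring⟩

theorem one_half_notMem_ZPlusAlphaZ (hα : Irrational α) : 1 / 2 ∉ ZPlusAlphaZ α := by
  rintro ⟨m, k, h⟩
  obtain rfl | hk := eq_or_ne k 0
  · have : (1 : ℤ) = 2 * m := by
      rify
      linarith
    lia
  · exact ((hα.intCast_mul hk).intCast_add m).ne_rat (1 / 2) (by rw [← h]; norm_num)

theorem eventually_residual_notMem {S : Set ℝ} (hS : S.Countable) :
    ∀ᶠ x in residual ℝ, x ∉ S :=
  residual_of_dense_Gδ hS.isGδ_compl (hS.dense_compl ℝ)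

theorem exists_wellApproximableFromBelow (hα : Irrational α) :
    ∃ β ∈ Ioo (0 : ℝ) (1 / 2), Irrational β ∧ β ∉ ZPlusAlphaZ α ∧ β + 1 / 2 ∉ ZPlusAlphaZ α ∧
      WellApproximableFromBelow α β := by
  have hshift : {β : ℝ | β + 1 / 2 ∈ ZPlusAlphaZ α}.Countable :=
    (countable_ZPlusAlphaZ α).preimage (add_left_injective (1 / 2))
  have hgeneric : ∀ᶠ β in residual ℝ, Irrational β ∧ β ∉ ZPlusAlphaZ α ∧
      β + 1 / 2 ∉ ZPlusAlphaZ α ∧ WellApproximableFromBelow α β :=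
    eventually_residual_irrational.and <|
      (eventually_residual_notMem (countable_ZPlusAlphaZ α)).and <|
      (eventually_residual_notMem hshift).and (eventually_residual_wellApproximableFromBelow hα)
  exact (dense_of_mem_residual hgeneric).inter_open_nonempty _ isOpen_Ioo
    (nonempty_Ioo.2 one_half_pos)

end Generic

section Fibre

instance isAddRightInvariant_uniformOn_univ {G : Type*} [AddGroup G] [MeasurableSpace G]
    [DiscreteMeasurableSpace G] :
    (ProbabilityTheory.uniformOn (univ : Set G)).IsAddRightInvariant := by
  rw [ProbabilityTheory.uniformOn, ProbabilityTheory.cond, Measure.restrict_univ]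
  infer_instance

theorem ergodic_skewProduct_halfArcIndicator {α : ℝ} (hα : Irrational α) (b : ℝ)
    (ν : Measure (Fin 2)) [SFinite ν] [ν.IsAddRightInvariant] :
    Ergodic (skewProduct (rotMap α) (halfArcIndicator b)) (volume.prod ν) :=
  ergodic_skewProduct_of_comp_eq_add_one (measurePreserving_rotMap α)
    (ergodic_iterate_rotMap hα two_ne_zero) (measurable_halfArcIndicator b)
    (measurePreserving_rotMap (1 / 2)).quasiMeasurePreserving
    (fun _ ↦ add_right_comm _ _ _) (halfArcIndicator_add_half b)

end Fibre

end VeechSataev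

open VeechSataev ProbabilityTheory in
theorem stmt_0_general {α : ℝ} (hα : BadlyApproximable α) :
    ∃ β₁ β₂ : ℝ,
      Irrational β₁ ∧ Irrational β₂ ∧ 0 < β₁ ∧ β₁ < β₂ ∧ β₂ < 1 ∧
      β₁ ≠ 1 - α ∧ β₂ ≠ 1 - α ∧
      β₁ ∉ ZPlusAlphaZ α ∧ β₂ ∉ ZPlusAlphaZ α ∧ β₂ - β₁ ∉ ZPlusAlphaZ α ∧
      ¬ LinearlyRecurrent
          (LVST α ![β₁, β₂] ![(1 : Equiv.Perm (Fin 2)), Equiv.swap 0 1, 1]) ∧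
      ∃ μ : Measure (AddCircle (1 : ℝ) × Fin 2),
        IsProbabilityMeasure μ ∧
        MeasurePreserving (VST α ![β₁, β₂] ![(1 : Equiv.Perm (Fin 2)), Equiv.swap 0 1, 1]) μ μ ∧
        (∀ ν : Measure (AddCircle (1 : ℝ) × Fin 2), IsProbabilityMeasure ν →
          MeasurePreserving (VST α ![β₁, β₂] ![(1 : Equiv.Perm (Fin 2)), Equiv.swap 0 1, 1]) ν ν →
            ν = μ) ∧
        ¬ Rigid (VST α ![β₁, β₂] ![(1 : Equiv.Perm (Fin 2)), Equiv.swap 0 1, 1]) μ := by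
  have hirr := hα.irrational
  obtain ⟨β, ⟨hβ0, hβ1⟩, hβ, hmem₁, hmem₂, happrox⟩ := exists_wellApproximableFromBelow hirr
  have hne {x : ℝ} (hx : x ∉ ZPlusAlphaZ α) : x ≠ 1 - α := fun h ↦
    hx (h ▸ one_sub_mem_ZPlusAlphaZ α)
  have hhalf : β + 1 / 2 - β ∉ ZPlusAlphaZ α := by
    rw [add_sub_cancel_left]
    exact one_half_notMem_ZPlusAlphaZ hirr
  refine ⟨β, β + 1 / 2, hβ, by simpa using hβ.add_ratCast (1 / 2), hβ0, by linarith, by linarith,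
    hne hmem₁, hne hmem₂, hmem₁, hmem₂, hhalf, ?_, ?_⟩
  · have hmono : Monotone ![β, β + 1 / 2] := by
      simp
    exact not_linearlyRecurrent_LVST _ hα hmono hβ0 hβ1.le happrox
  have hfibre (g : Fin 2) : uniformOn (univ : Set (Fin 2)) {g} ≠ 0 := by simp [uniformOn_univ]
  have herg := ergodic_skewProduct_halfArcIndicator hirr β (uniformOn (univ : Set (Fin 2)))
  obtain ⟨δ, hδ, hbirkhoff⟩ := exists_le_volume_birkhoffSum_halfArcIndicator_ne_zero β hα
  rw [VST_pair_eq_skewProduct α hβ0.le hβ1.le]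
  exact ⟨_, inferInstance, herg.toMeasurePreserving, fun ν _ hν ↦
    eq_prod_of_measurePreserving_skewProduct hfibre
      (fun m _ hm ↦ eq_volume_of_measurePreserving_rotMap hirr m hm)
      (measurePreserving_rotMap α).measurable herg hν,
    not_rigid_skewProduct herg.toMeasurePreserving (hfibre 0) hδ hbirkhoff⟩

theorem stmt_0 :
    ∃ α β₁ β₂ : ℝ,
      Irrational α ∧ 0 < α ∧ α < 1 ∧
      Irrational β₁ ∧ Irrational β₂ ∧ 0 < β₁ ∧ β₁ < β₂ ∧ β₂ < 1 ∧
      β₁ ≠ 1 - α ∧ β₂ ≠ 1 - α ∧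
      β₁ ∉ ZPlusAlphaZ α ∧ β₂ ∉ ZPlusAlphaZ α ∧ β₂ - β₁ ∉ ZPlusAlphaZ α ∧
      ¬ LinearlyRecurrent
          (LVST α ![β₁, β₂] ![(1 : Equiv.Perm (Fin 2)), Equiv.swap 0 1, 1]) ∧
      ∃ μ : Measure (AddCircle (1 : ℝ) × Fin 2),
        IsProbabilityMeasure μ ∧
        MeasurePreserving (VST α ![β₁, β₂] ![(1 : Equiv.Perm (Fin 2)), Equiv.swap 0 1, 1]) μ μ ∧
        (∀ ν : Measure (AddCircle (1 : ℝ) × Fin 2), IsProbabilityMeasure ν →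
          MeasurePreserving (VST α ![β₁, β₂] ![(1 : Equiv.Perm (Fin 2)), Equiv.swap 0 1, 1]) ν ν →
            ν = μ) ∧
        ¬ Rigid (VST α ![β₁, β₂] ![(1 : Equiv.Perm (Fin 2)), Equiv.swap 0 1, 1]) μ := by
  have hα := VeechSataev.badlyApproximable_sqrt_two_sub_one
  obtain ⟨β₁, β₂, h⟩ := stmt_0_general hα
  exact ⟨√2 - 1, β₁, β₂, hα.irrational, sub_pos.2 Real.one_lt_sqrt_two,
    by linarith [Real.sqrt_two_lt_three_halves], h⟩
end

section
/- If (X_L, S) is minimal and there exists an S-invariant Borel probability measure μ on X_L with limsup_{n→∞} n·e_n(S, μ) > 0, then (X_L, S) is uniquely ergodic, i.e., μ is the only S-invariant Borel probability measure on X_L. -/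
open MeasureTheory Filter Set
open scoped ENNReal symmDiff Classical

/-!
A symbolic system whose `n`-cylinders all have measure at least `c / n`, for infinitely many `n`,
and whose orbits all visit every cylinder, is ergodic. Suppose an invariant set `E` has measure
neither zero nor full, and approximate it by a set `B` depending on the first `m` letters, with
error `D = E ∆ B` much smaller than `c`. Over `N` steps most points of `E` visit `B` almost always
and most points of `Eᶜ` almost never, while the number of visits drops by at most one along each
step of an orbit. An orbit going from the first kind of point to the second therefore realizes
every number of visits between `N / 3` and `2 * N / 3`. Each of these events contains a cylinder of
length `N + m`, so together they have measure at least of order `c`; yet all of them consist of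
points visiting `D` at least `N / 3` times, which is an event of measure at most `3 * μ D`.

If `μ` and `ν` are invariant, the lower bound on cylinders passes from `μ` to `μ + ν`, which is thus
ergodic; both measures are absolutely continuous with respect to it, hence they agree.
-/

/-! ### Visits of an orbit to a set -/

section Visits

variable {X : Type*} {T : X → X} {B E : Set X} {N : ℕ} {x : X}

/-- The number of times `i < N` at which the orbit of `x` under `T` lies in `B`. -/
noncomputable def visitCount (T : X → X) (B : Set X) (N : ℕ) (x : X) : ℕ :=
  birkhoffSum T (B.indicator 1) N x

lemma visitCount_le_visitCount_apply_add_one (T : X → X) (B : Set X) (N : ℕ) (x : X) :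
    visitCount T B N x ≤ visitCount T B N (T x) + 1 := by
  have hsum : visitCount T B N x + B.indicator 1 (T^[N] x)
      = B.indicator 1 x + visitCount T B N (T x) :=
    (birkhoffSum_succ T (B.indicator 1) N x).symm.trans (birkhoffSum_succ' T (B.indicator 1) N x)
  have hle : B.indicator (1 : X → ℕ) x ≤ 1 := indicator_le_self B 1 x
  omega

lemma iterate_mem_iff_of_preimage_eq (hE : T ⁻¹' E = E) (i : ℕ) : T^[i] x ∈ E ↔ x ∈ E :=
  Set.ext_iff.1 (Function.IsFixedPt.preimage_iterate hE i) x

lemma visitCount_add_visitCount_symmDiff (hE : T ⁻¹' E = E) (B : Set X) (N : ℕ) (hx : x ∈ E) :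
    visitCount T B N x + visitCount T (E ∆ B) N x = N := by
  have hone (i : ℕ) : B.indicator 1 (T^[i] x) + (E ∆ B).indicator 1 (T^[i] x) = 1 := by
    have hi : T^[i] x ∈ E := (iterate_mem_iff_of_preimage_eq hE i).2 hx
    by_cases hB : T^[i] x ∈ B <;> simp [mem_symmDiff, hi, hB]
  simp only [visitCount, birkhoffSum, ← Finset.sum_add_distrib, hone, Finset.sum_const,
    Finset.card_range, smul_eq_mul, mul_one]

lemma visitCount_symmDiff_of_notMem (hE : T ⁻¹' E = E) (B : Set X) (N : ℕ) (hx : x ∉ E) :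
    visitCount T (E ∆ B) N x = visitCount T B N x := by
  unfold visitCount birkhoffSum
  refine Finset.sum_congr rfl fun i _ => ?_
  have hi : T^[i] x ∉ E := mt (iterate_mem_iff_of_preimage_eq hE i).1 hx
  simp [Set.indicator_apply, mem_symmDiff, hi]

variable [MeasurableSpace X] {μ : Measure X}

lemma measurable_visitCount (hT : Measurable T) (hB : MeasurableSet B) (N : ℕ) :
    Measurable (visitCount T B N) :=
  Finset.measurable_fun_sum (Finset.range N) fun i _ =>
    (measurable_one.indicator hB).comp (hT.iterate i)

lemma lintegral_visitCount (hT : MeasurePreserving T μ μ) (hB : MeasurableSet B) (N : ℕ) :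
    ∫⁻ x, visitCount T B N x ∂μ = N * μ B := by
  have hind : Measurable (B.indicator (1 : X → ℝ≥0∞)) := measurable_one.indicator hB
  have hcast (x : X) :
      (visitCount T B N x : ℝ≥0∞) = ∑ i ∈ Finset.range N, B.indicator 1 (T^[i] x) := by
    simp [visitCount, birkhoffSum, Set.indicator_apply]
  calc ∫⁻ x, visitCount T B N x ∂μ
      = ∑ i ∈ Finset.range N, ∫⁻ x, B.indicator 1 (T^[i] x) ∂μ := by
        simp_rw [hcast]
        exact lintegral_finsetSum _ fun i _ => hind.comp (hT.measurable.iterate i)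
    _ = ∑ _ ∈ Finset.range N, μ B := Finset.sum_congr rfl fun i _ => by
        rw [(hT.iterate i).lintegral_comp hind, lintegral_indicator_one hB]
    _ = N * μ B := by simp

lemma measure_le_mul_visitCount_le (hT : MeasurePreserving T μ μ) (hB : MeasurableSet B)
    (hN : N ≠ 0) (k : ℕ) : μ {x | N ≤ k * visitCount T B N x} ≤ k * μ B := by
  have hcount : Measurable fun x => (visitCount T B N x : ℝ≥0∞) :=
    measurable_from_top.comp (measurable_visitCount hT.measurable hB N)
  have hmarkov : N * μ {x | N ≤ k * visitCount T B N x} ≤ N * (k * μ B) :=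
    calc N * μ {x | N ≤ k * visitCount T B N x}
        = N * μ {x | (N : ℝ≥0∞) ≤ k * visitCount T B N x} := by norm_cast
      _ ≤ ∫⁻ x, k * visitCount T B N x ∂μ := mul_meas_ge_le_lintegral (hcount.const_mul _) _
      _ = N * (k * μ B) := by
        rw [lintegral_const_mul _ hcount, lintegral_visitCount hT hB, mul_left_comm]
  exact (ENNReal.mul_le_mul_iff_right (Nat.cast_ne_zero.2 hN) (ENNReal.natCast_ne_top N)).1 hmarkov

lemma exists_mem_mul_visitCount_lt (hT : MeasurePreserving T μ μ) (hB : MeasurableSet B)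
    (hN : N ≠ 0) {k : ℕ} (hBE : k * μ B < μ E) : ∃ x ∈ E, k * visitCount T B N x < N := by
  by_contra! hE
  exact hBE.not_ge ((measure_mono hE).trans (measure_le_mul_visitCount_le hT hB hN k))

end Visits

/-! ### Itineraries and cylinders -/

section Itineraries

lemma exists_dependsOn_Iio_measure_symmDiff_lt {α : ℕ → Type*} [∀ n, MeasurableSpace (α n)]
    (μ : Measure (∀ n, α n)) [IsFiniteMeasure μ] {E : Set (∀ n, α n)} (hE : MeasurableSet E)
    {ε : ℝ≥0∞} (hε : 0 < ε) :
    ∃ C m, MeasurableSet C ∧ DependsOn (· ∈ C) (Iio m) ∧ μ (E ∆ C) < ε := by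
  obtain ⟨δ, -, hδε⟩ := ENNReal.lt_iff_exists_real_btwn.1 hε
  obtain ⟨C, hC, hEC⟩ := (Measure.MeasureDense.of_generateFrom_isSetAlgebra_finite μ
    isSetAlgebra_measurableCylinders generateFrom_measurableCylinders.symm).approx E hE
    (measure_ne_top μ E) δ (ENNReal.ofReal_pos.1 hδε.1)
  rw [measurableCylinders_nat] at hC
  simp only [mem_iUnion, mem_singleton_iff] at hC
  obtain ⟨n, S, hS, rfl⟩ := hC
  refine ⟨_, n + 1, hS.cylinder _, fun x y hxy => ?_, hEC.trans hδε.2⟩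
  have hrestrict : (Finset.Iic n).restrict x = (Finset.Iic n).restrict y :=
    funext fun i => hxy i (Nat.lt_succ_of_le (Finset.mem_Iic.1 i.2))
  simp only [mem_cylinder, hrestrict]

variable {X A : Type*} {T : X → X} {φ : X → A}

/-- The sequence read along the orbit of `x` under `T` through the observable `φ`. -/
def itinerary (T : X → X) (φ : X → A) (x : X) : ℕ → A := fun i => φ (T^[i] x)

/-- The `n`-cylinder of `x` for the coding of `T` by `φ`: the points whose first `n` observations
are those of `x`. -/
def itineraryCylinder (T : X → X) (φ : X → A) (x : X) (n : ℕ) : Set X :=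
  itinerary T φ ⁻¹' PiNat.cylinder (itinerary T φ x) n

lemma itinerary_iterate (T : X → X) (φ : X → A) (x : X) (p i : ℕ) :
    itinerary T φ (T^[p] x) i = itinerary T φ x (i + p) :=
  congrArg φ (Function.iterate_add_apply T i p x).symm

lemma visitCount_eq_of_mem_itineraryCylinder {C : Set (ℕ → A)} {m N : ℕ} {x y : X}
    (hC : DependsOn (· ∈ C) (Iio m)) (hy : y ∈ itineraryCylinder T φ x (N + m)) :
    visitCount T (itinerary T φ ⁻¹' C) N y = visitCount T (itinerary T φ ⁻¹' C) N x := by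
  unfold visitCount birkhoffSum
  refine Finset.sum_congr rfl fun i hi => ?_
  have hmem : (itinerary T φ (T^[i] y) ∈ C) = (itinerary T φ (T^[i] x) ∈ C) := hC fun j hj => by
    have hij : j + i < N + m := by
      rw [Finset.mem_range] at hi
      rw [mem_Iio] at hj
      omega
    simpa only [itinerary_iterate] using hy (j + i) hij
  simp only [Set.indicator_apply, mem_preimage, hmem, Pi.one_apply]

lemma exists_eq_of_le_succ_add_one {g : ℕ → ℕ} (hg : ∀ j, g j ≤ g (j + 1) + 1) {p k : ℕ}
    (h0 : k ≤ g 0) (hp : g p ≤ k) : ∃ j, g j = k := by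
  by_contra! hne
  have hlt (j : ℕ) : k < g j := by
    induction j with
    | zero => exact lt_of_le_of_ne h0 (hne 0).symm
    | succ j ih =>
      have := hg j
      have := hne (j + 1)
      omega
  exact (hlt p).not_ge hp

variable [MeasurableSpace X] {μ : Measure X}

lemma le_measure_visitCount_eq {C : Set (ℕ → A)} {m N k p : ℕ} {x : X} {a : ℝ≥0∞}
    (hC : DependsOn (· ∈ C) (Iio m)) (ha : ∀ z, a ≤ μ (itineraryCylinder T φ z (N + m)))
    (hx : k ≤ visitCount T (itinerary T φ ⁻¹' C) N x)
    (hp : visitCount T (itinerary T φ ⁻¹' C) N (T^[p] x) ≤ k) :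
    a ≤ μ (visitCount T (itinerary T φ ⁻¹' C) N ⁻¹' {k}) := by
  obtain ⟨j, hj⟩ : ∃ j, visitCount T (itinerary T φ ⁻¹' C) N (T^[j] x) = k := by
    refine exists_eq_of_le_succ_add_one (fun j => ?_) hx hp
    rw [Function.iterate_succ_apply']
    exact visitCount_le_visitCount_apply_add_one T _ N _
  exact (ha (T^[j] x)).trans
    (measure_mono fun z hz => (visitCount_eq_of_mem_itineraryCylinder hC hz).trans hj)

variable {E : Set X} {C : Set (ℕ → A)} {m N : ℕ} {a : ℝ≥0∞}

lemma mul_le_measure_le_mul_visitCount_symmDiff {x y : X} {p : ℕ} (hT : Measurable T)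
    (hE : T ⁻¹' E = E) (hB : MeasurableSet (itinerary T φ ⁻¹' C)) (hC : DependsOn (· ∈ C) (Iio m))
    (hp : T^[p] x ∈ itineraryCylinder T φ y (N + m))
    (ha : ∀ z, a ≤ μ (itineraryCylinder T φ z (N + m)))
    (hxE : x ∈ E) (hx : 3 * visitCount T (E ∆ (itinerary T φ ⁻¹' C)) N x < N)
    (hyE : y ∉ E) (hy : 3 * visitCount T (E ∆ (itinerary T φ ⁻¹' C)) N y < N) :
    (N / 3 : ℕ) * a ≤ μ {z | N ≤ 3 * visitCount T (E ∆ (itinerary T φ ⁻¹' C)) N z} := by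
  set B := itinerary T φ ⁻¹' C
  set K := Finset.Icc (N / 3 + 1) (2 * (N / 3)) with hK
  have hlevel : ∀ k ∈ K, a ≤ μ (visitCount T B N ⁻¹' {k}) := by
    intro k hk
    rw [hK, Finset.mem_Icc] at hk
    have hxB := visitCount_add_visitCount_symmDiff hE B N hxE
    have hyB := visitCount_symmDiff_of_notMem hE B N hyE
    have hpB : visitCount T B N (T^[p] x) = visitCount T B N y :=
      visitCount_eq_of_mem_itineraryCylinder hC hp
    exact le_measure_visitCount_eq hC ha (x := x) (p := p) (by lia) (by lia)
  have hsub : visitCount T B N ⁻¹' K ⊆ {z | N ≤ 3 * visitCount T (E ∆ B) N z} := by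
    intro z hz
    rw [mem_preimage, hK, Finset.mem_coe, Finset.mem_Icc] at hz
    rw [mem_ofPred_eq]
    by_cases hzE : z ∈ E
    · have := visitCount_add_visitCount_symmDiff hE B N hzE
      omega
    · have := visitCount_symmDiff_of_notMem hE B N hzE
      omega
  calc (N / 3 : ℕ) * a = K.card • a := by
        rw [Nat.card_Icc, nsmul_eq_mul]
        congr 2
        omega
    _ ≤ ∑ k ∈ K, μ (visitCount T B N ⁻¹' {k}) := Finset.card_nsmul_le_sum _ _ _ hlevel
    _ = μ (visitCount T B N ⁻¹' K) := sum_measure_preimage_singleton _ fun k _ =>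
        measurable_visitCount hT hB N (measurableSet_singleton k)
    _ ≤ _ := measure_mono hsub

lemma mul_le_mul_measure_symmDiff (hT : MeasurePreserving T μ μ) (hE : MeasurableSet E)
    (hinv : T ⁻¹' E = E) (hB : MeasurableSet (itinerary T φ ⁻¹' C))
    (hC : DependsOn (· ∈ C) (Iio m))
    (hdense : ∀ x y n, ∃ p, T^[p] x ∈ itineraryCylinder T φ y n)
    (ha : ∀ z, a ≤ μ (itineraryCylinder T φ z (N + m))) (hN : m + 4 ≤ N)
    (hDE : 3 * μ (E ∆ (itinerary T φ ⁻¹' C)) < μ E)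
    (hDE' : 3 * μ (E ∆ (itinerary T φ ⁻¹' C)) < μ Eᶜ) :
    (N + m : ℕ) * a ≤ 18 * μ (E ∆ (itinerary T φ ⁻¹' C)) := by
  set D := E ∆ (itinerary T φ ⁻¹' C)
  have hD : MeasurableSet D := hE.symmDiff hB
  have hN0 : N ≠ 0 := by omega
  obtain ⟨x, hxE, hx⟩ := exists_mem_mul_visitCount_lt hT hD hN0 (k := 3) (mod_cast hDE)
  obtain ⟨y, hyE, hy⟩ := exists_mem_mul_visitCount_lt hT hD hN0 (k := 3) (mod_cast hDE')
  obtain ⟨p, hp⟩ := hdense x y (N + m)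
  have hlen : N + m ≤ 6 * (N / 3) := by omega
  calc ((N + m : ℕ) : ℝ≥0∞) * a ≤ (6 * (N / 3) : ℕ) * a := by gcongr
    _ = 6 * ((N / 3 : ℕ) * a) := by push_cast; ring
    _ ≤ 6 * μ {z | N ≤ 3 * visitCount T D N z} := by
        gcongr
        exact mul_le_measure_le_mul_visitCount_symmDiff hT.measurable hinv hB hC hp ha hxE hx
          hyE hy
    _ ≤ 6 * (3 * μ D) := by
        gcongr
        exact_mod_cast measure_le_mul_visitCount_le hT hD hN0 3
    _ = 18 * μ D := by ring

variable [MeasurableSpace A]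

lemma exists_itinerary_preimage_measure_symmDiff_lt [IsFiniteMeasure μ]
    (hgen : ‹MeasurableSpace X› = MeasurableSpace.pi.comap (itinerary T φ))
    (hE : MeasurableSet E) {ε : ℝ≥0∞} (hε : 0 < ε) :
    ∃ C m, MeasurableSet (itinerary T φ ⁻¹' C) ∧ DependsOn (· ∈ C) (Iio m) ∧
      μ (E ∆ (itinerary T φ ⁻¹' C)) < ε := by
  have hmeas : Measurable (itinerary T φ) := measurable_iff_comap_le.2 hgen.ge
  obtain ⟨F, hF, rfl⟩ := hgen.le E hE
  obtain ⟨C, m, hC, hCm, hFC⟩ :=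
    exists_dependsOn_Iio_measure_symmDiff_lt (μ.map (itinerary T φ)) hF hε
  refine ⟨C, m, hmeas hC, hCm, ?_⟩
  rwa [Measure.map_apply hmeas (hF.symmDiff hC), preimage_symmDiff] at hFC

theorem ergodic_of_frequently_le_mul_measure_itineraryCylinder [IsFiniteMeasure μ] {c : ℝ≥0∞}
    (hgen : ‹MeasurableSpace X› = MeasurableSpace.pi.comap (itinerary T φ))
    (hT : MeasurePreserving T μ μ)
    (hdense : ∀ x y n, ∃ p, T^[p] x ∈ itineraryCylinder T φ y n) (hc : 0 < c)
    (hfreq : ∃ᶠ n : ℕ in atTop, ∀ x, c ≤ n * μ (itineraryCylinder T φ x n)) :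
    Ergodic T μ := by
  refine { toMeasurePreserving := hT, aeconst_set := fun E hE hinv => ?_ }
  rw [eventuallyConst_set', ae_eq_empty, ae_eq_univ]
  by_contra! hpos
  obtain ⟨hE0, hEc0⟩ := hpos
  obtain ⟨C, m, hB, hC, hD⟩ := exists_itinerary_preimage_measure_symmDiff_lt (μ := μ) hgen hE
    (ε := min (c / 18) (min (μ E / 3) (μ Eᶜ / 3)))
    (by simp [hc.ne', pos_iff_ne_zero, hE0, hEc0])
  have hdiv {b r : ℝ≥0∞} {k : ℕ} [k.AtLeastTwo] (h : b < r / ofNat(k)) : ofNat(k) * b < r := by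
    rwa [ENNReal.lt_div_iff_mul_lt (by simp) (by simp), mul_comm] at h
  simp only [lt_min_iff] at hD
  obtain ⟨n, hn, hcn⟩ := frequently_atTop.1 hfreq (2 * m + 4)
  obtain ⟨N, rfl⟩ := Nat.exists_eq_add_of_le' (show m ≤ n by omega)
  have hn0 : ((N + m : ℕ) : ℝ≥0∞) ≠ 0 := Nat.cast_ne_zero.2 (by omega)
  refine (hdiv hD.1).not_ge ?_
  calc c = (N + m : ℕ) * (c / (N + m : ℕ)) :=
        (ENNReal.mul_div_cancel hn0 (ENNReal.natCast_ne_top _)).symm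
    _ ≤ 18 * μ (E ∆ (itinerary T φ ⁻¹' C)) :=
        mul_le_mul_measure_symmDiff hT hE hinv hB hC hdense
          (fun x => ENNReal.div_le_of_le_mul' (hcn x)) (by omega) (hdiv hD.2.1) (hdiv hD.2.2)

end Itineraries

/-! ### Invariant measures -/

section InvariantMeasures

variable {X : Type*} [MeasurableSpace X] {T : X → X} {μ ν : Measure X}

lemma measure_pos_of_forall_exists_iterate_mem [NeZero μ]
    (hT : Measure.QuasiMeasurePreserving T μ μ) {s : Set X} (hs : ∀ x, ∃ p, T^[p] x ∈ s) :
    0 < μ s := by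
  refine pos_iff_ne_zero.2 fun hs0 => NeZero.ne (μ univ) ?_
  have hcover : ⋃ p, T^[p] ⁻¹' s = univ := eq_univ_of_forall fun x => mem_iUnion.2 (hs x)
  rw [← hcover, measure_iUnion_null_iff]
  exact fun p => (hT.iterate p).preimage_null hs0

lemma eq_of_ergodic_add [IsFiniteMeasure μ] [IsFiniteMeasure ν] (hμ : MeasurePreserving T μ μ)
    (hμν : Ergodic T (μ + ν)) (huniv : μ univ = ν univ) : μ = ν := by
  have hac : μ + μ ≪ μ + ν := .add_left (.add_right .rfl ν) (.add_right .rfl ν)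
  have hadd : μ + μ = μ + ν := hμν.eq_of_absolutelyContinuous_measure_univ_eq
    (hμ.add_measure hμ) hac (by simp [huniv])
  exact (Measure.add_right_inj μ μ ν).1 hadd

end InvariantMeasures

/-! ### Subshifts -/

section Subshifts

variable {A : Type*} {L : Set (List A)}

lemma iterate_shiftXL_apply (x : XL L) (p i : ℕ) : ((shiftXL L)^[p] x).1 i = x.1 (i + p) := by
  induction p generalizing x with
  | zero => rfl
  | succ _ ih => exact ih (shiftXL L x)

lemma itinerary_shiftXL (L : Set (List A)) :
    itinerary (shiftXL L) (fun x => x.1 0) = Subtype.val := by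
  ext x i
  rw [itinerary, iterate_shiftXL_apply, zero_add]

lemma langCylinder_wordAt (x : XL L) (n : ℕ) :
    langCylinder L (wordAt x.1 0 n) = itineraryCylinder (shiftXL L) (fun x => x.1 0) x n := by
  ext y
  simp [langCylinder, itineraryCylinder, itinerary_shiftXL, wordAt, PiNat.cylinder, Fin.forall_iff]

lemma MinimalLang.exists_iterate_mem_langCylinder (hL : MinimalLang L) {w : List A} (hw : w ∈ L)
    (x : XL L) : ∃ p, (shiftXL L)^[p] x ∈ langCylinder L w := by
  obtain ⟨n, hn⟩ := hL w hw
  obtain ⟨u, u', hfactor⟩ := hn (wordAt x.1 0 n) (x.2 0 n) List.length_ofFn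
  refine ⟨u.length, fun i => ?_⟩
  have hlen : n = u.length + w.length + u'.length := by
    simpa [wordAt, add_assoc] using congrArg List.length hfactor
  have hletter : (wordAt x.1 0 n)[u.length + i]? = w[i.1]? := by
    rw [hfactor]
    simp [List.getElem?_append]
  rw [iterate_shiftXL_apply, add_comm]
  simp only [wordAt, hlen, List.getElem?_ofFn, Option.dite_none_right_eq_some,
    List.getElem?_eq_getElem i.2] at hletter
  simpa using hletter.2

lemma MinimalLang.cylMinMeasure_le_itineraryCylinder [MeasurableSpace A] {μ : Measure (XL L)}
    [NeZero μ] (hL : MinimalLang L) (hμ : MeasurePreserving (shiftXL L) μ μ) (x : XL L) (n : ℕ) :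
    cylMinMeasure L μ n ≤ μ (itineraryCylinder (shiftXL L) (fun x => x.1 0) x n) := by
  have hpos := measure_pos_of_forall_exists_iterate_mem hμ.quasiMeasurePreserving
    (hL.exists_iterate_mem_langCylinder (x.2 0 n))
  rw [← langCylinder_wordAt]
  exact sInf_le ⟨_, x.2 0 n, List.length_ofFn, rfl, hpos⟩

theorem stmt_1_general [MeasurableSpace A] (hmin : MinimalLang L) {μ ν : Measure (XL L)}
    [IsProbabilityMeasure μ] [IsProbabilityMeasure ν] (hμ : MeasurePreserving (shiftXL L) μ μ)
    (hlim : 0 < limsup (fun n : ℕ => (n : ℝ≥0∞) * cylMinMeasure L μ n) atTop)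
    (hν : MeasurePreserving (shiftXL L) ν ν) : ν = μ := by
  obtain ⟨c, hc0, hc⟩ := exists_between hlim
  have hfreq := frequently_lt_of_lt_limsup (by isBoundedDefault) hc
  refine (eq_of_ergodic_add hμ ?_ (by simp)).symm
  refine ergodic_of_frequently_le_mul_measure_itineraryCylinder (φ := fun x => x.1 0) (c := c)
    ?_ (hμ.add_measure hν) ?_ hc0 (hfreq.mono fun n hn x => hn.le.trans ?_)
  · rw [itinerary_shiftXL]; rfl
  · intro x y n
    rw [← langCylinder_wordAt]
    exact hmin.exists_iterate_mem_langCylinder (y.2 0 n) x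
  · gcongr
    exact (hmin.cylMinMeasure_le_itineraryCylinder hμ x n).trans (le_self_add)

end Subshifts

theorem stmt_1 {A : Type*} [Fintype A] [MeasurableSpace A] [MeasurableSingletonClass A]
    (L : Set (List A)) (hL : IsLanguage L) (hmin : MinimalLang L)
    (μ : Measure (XL L)) (hprob : IsProbabilityMeasure μ)
    (hinv : MeasurePreserving (shiftXL L) μ μ)
    (hlim : 0 < Filter.limsup (fun n : ℕ => (n : ℝ≥0∞) * cylMinMeasure L μ n) Filter.atTop) :
    ∀ ν : Measure (XL L), IsProbabilityMeasure ν → MeasurePreserving (shiftXL L) ν ν → ν = μ := by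
  intro ν hν hνinv
  exact stmt_1_general hmin hinv hlim hνinv
end

section
/- The generalized Veech–Sataev system T is minimal — that is, the forward orbit {Tⁿ(x, s) : n ≥ 0} of every point (x, s) is dense in (ℝ/ℤ) × {1, …, d} (with the product of the circle topology and the discrete topology) — if and only if no nonempty proper subset of {1, …, d} is invariant under all the permutations σ₀, …, σ_r. -/
open MeasureTheory Filter Set
open scoped ENNReal symmDiff Classical

/-!
Let `K` be the `ω`-limit set of an orbit of a skew product `T (x, s) = (R x, g x s)` with finite
fibre `F`. Where `g` is locally constant, `T` is a local homeomorphism, so the fibre of `K` over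
`R x` is the image by `g x` of the fibre over `x`. As `K` is closed, the fibres vary upper
semicontinuously, so those of least cardinality lie over an open set `U` on which they are locally
constant. The complement of `U` is closed, and both it and `U` are preserved by `R` except at jumps
of `g`. Minimality of `R` therefore forces each `R`-orbit inside the complement to cross a jump in
the future and another one in the past.

For the Veech–Sataev system the jumps are among `0` and the marked points, and the conditions on
these leave `0` as the only point between two jumps of an orbit: its predecessor `-α` may be marked.
So `U` contains the circle minus a point and is connected, and the fibres over `U` are one and the
same set, which is nonempty and invariant under all the permutations.
-/

open scoped Topology

section ForwardMinimal

variable {X : Type*}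

/-- The points lying between two visits to `D` along their `R`-orbit: one at a time `≥ 0` and one
at a time `< 0`. -/
def resonantSet (R : Equiv.Perm X) (D : Set X) : Set X :=
  {x | (∃ k, R^[k] x ∈ D) ∧ ∃ l, R.symm^[l + 1] x ∈ D}

theorem resonantSet_mono {R : Equiv.Perm X} {D D' : Set X} (h : D ⊆ D') :
    resonantSet R D ⊆ resonantSet R D' :=
  fun _ hx => hx.imp (Exists.imp fun _ hk => h hk) (Exists.imp fun _ hl => h hl)

variable [TopologicalSpace X]

/-- Minimality of a self-map, not assumed to be continuous: every forward orbit is dense. -/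
def IsForwardMinimal (T : X → X) : Prop := ∀ x, Dense (range fun n : ℕ => T^[n] x)

theorem IsForwardMinimal.mapClusterPt {T : X → X} (hT : IsForwardMinimal T) (x y : X) :
    MapClusterPt y atTop (fun n => T^[n] x) := by
  rw [mapClusterPt_iff_frequently]
  refine fun s hs => frequently_atTop.2 fun N => ?_
  obtain ⟨_, ⟨n, rfl⟩, hns⟩ := (hT (T^[N] x)).inter_nhds_nonempty hs
  exact ⟨n + N, Nat.le_add_left N n, by rwa [Function.iterate_add_apply]⟩

theorem IsForwardMinimal.eq_univ_of_isClosed {T : X → X} (hT : IsForwardMinimal T) {C : Set X}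
    (hC : IsClosed C) {x : X} (hx : ∀ n, T^[n] x ∈ C) : C = univ :=
  hC.closure_eq.symm.trans ((hT x).mono (range_subset_iff.2 hx)).closure_eq

theorem subset_resonantSet {R : Equiv.Perm X} (hR : IsForwardMinimal R)
    (hR' : IsForwardMinimal R.symm) {C D : Set X} (hC : IsClosed C) (hne : C ≠ univ)
    (hinv : ∀ x ∉ D, R x ∈ C ↔ x ∈ C) : C ⊆ resonantSet R D := by
  intro x hx
  constructor <;> by_contra! h
  · refine hne (hR.eq_univ_of_isClosed hC (x := x) fun n => ?_)
    induction n with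
    | zero => exact hx
    | succ n ih => rwa [Function.iterate_succ_apply', hinv _ (h n)]
  · refine hne (hR'.eq_univ_of_isClosed hC (x := x) fun n => ?_)
    induction n with
    | zero => exact hx
    | succ n ih => rwa [← hinv _ (h n), Function.iterate_succ_apply', Equiv.apply_symm_apply]

end ForwardMinimal

section LimitSet

variable {X : Type*} [TopologicalSpace X]

/-- The `ω`-limit set of the forward orbit of `x` under `T`. -/
def limitSet (T : X → X) (x : X) : Set X := omegaLimit atTop (fun n : ℕ => T^[n]) {x}

theorem mem_limitSet {T : X → X} {x y : X} :
    y ∈ limitSet T x ↔ MapClusterPt y atTop (fun n => T^[n] x) :=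
  mem_omegaLimit_singleton_iff_mapClusterPt ..

theorem isClosed_limitSet (T : X → X) (x : X) : IsClosed (limitSet T x) :=
  isClosed_omegaLimit ..

theorem limitSet_subset_closure_orbit (T : X → X) (x : X) :
    limitSet T x ⊆ closure (range fun n : ℕ => T^[n] x) := fun _ hy =>
  mem_closure_iff_clusterPt.2 <|
    ClusterPt.mono (mem_limitSet.1 hy) (le_principal_iff.2 range_mem_map)

theorem mem_limitSet_iff_mapClusterPt_succ {T : X → X} {x y : X} :
    y ∈ limitSet T x ↔ MapClusterPt y atTop (fun n => T^[n + 1] x) := by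
  rw [mem_limitSet, ← map_add_atTop_eq_nat 1, ← mapClusterPt_comp, Function.comp_def,
    map_add_atTop_eq_nat]

theorem apply_mem_limitSet_iff {e : Equiv.Perm X} {y : X} (he : ContinuousAt e y)
    (he' : ContinuousAt e.symm (e y)) (x : X) : e y ∈ limitSet e x ↔ y ∈ limitSet e x := by
  rw [mem_limitSet_iff_mapClusterPt_succ, mem_limitSet]
  simp only [Function.iterate_succ_apply']
  refine ⟨fun h => ?_, fun h => h.continuousAt_comp he⟩
  simpa [Function.comp_def] using h.continuousAt_comp he'

end LimitSet

section MinFiber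

variable {X F : Type*}

/-- The base points over which the fibre of `K` has the least cardinality. -/
def minFiberSet (K : Set (X × F)) : Set X :=
  {x | ∀ y, (Prod.mk x ⁻¹' K).ncard ≤ (Prod.mk y ⁻¹' K).ncard}

theorem minFiberSet_nonempty [Nonempty X] (K : Set (X × F)) : (minFiberSet K).Nonempty :=
  ⟨_, fun y => Function.argmin_le (fun x => (Prod.mk x ⁻¹' K).ncard) y⟩

variable [TopologicalSpace X] [TopologicalSpace F] [Finite F] {K : Set (X × F)}

theorem eventually_fiber_subset (hK : IsClosed K) (x : X) :
    ∀ᶠ y in 𝓝 x, Prod.mk y ⁻¹' K ⊆ Prod.mk x ⁻¹' K := by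
  refine eventually_all.2 fun s => ?_
  by_cases hs : (x, s) ∈ K
  · exact .of_forall fun _ _ => hs
  · have hopen : IsOpen ((·, s) ⁻¹' Kᶜ : Set X) := hK.isOpen_compl.preimage (by fun_prop)
    exact Eventually.mono (hopen.mem_nhds hs) fun _ hy hy' => absurd hy' hy

theorem eventually_fiber_eq (hK : IsClosed K) {x : X} (hx : x ∈ minFiberSet K) :
    ∀ᶠ y in 𝓝 x, Prod.mk y ⁻¹' K = Prod.mk x ⁻¹' K :=
  (eventually_fiber_subset hK x).mono fun y hy => eq_of_subset_of_ncard_le hy (hx y)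

theorem isOpen_minFiberSet (hK : IsClosed K) : IsOpen (minFiberSet K) := by
  refine isOpen_iff_mem_nhds.2 fun x hx => (eventually_fiber_eq hK hx).mono fun y hy z => ?_
  rw [hy]
  exact hx z

theorem fiber_eq_of_mem_minFiberSet (hK : IsClosed K) (hconn : IsPreconnected (minFiberSet K))
    {x y : X} (hx : x ∈ minFiberSet K) (hy : y ∈ minFiberSet K) :
    Prod.mk y ⁻¹' K = Prod.mk x ⁻¹' K :=
  hconn.induction₂ (fun x y => Prod.mk y ⁻¹' K = Prod.mk x ⁻¹' K)
    (fun _ hz => nhdsWithin_le_nhds (eventually_fiber_eq hK hz))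
    (fun _ _ _ _ _ _ h h' => h'.trans h) (fun _ _ _ _ h => h.symm) hx hy

end MinFiber

section ProdShear

variable {X F : Type*} [TopologicalSpace X]

/-- The points around which `g` is not locally constant. -/
def jumpSet {Y : Type*} (g : X → Y) : Set X := {x | ¬ ∀ᶠ y in 𝓝 x, g y = g x}

theorem jumpSet_comp_subset {Y Z : Type*} (f : Y → Z) (g : X → Y) :
    jumpSet (f ∘ g) ⊆ jumpSet g :=
  fun _ hx h => hx (h.mono fun _ hy => congrArg f hy)

variable {R : X ≃ₜ X} {g : X → Equiv.Perm F}

theorem prodShear_iterate_fst (n : ℕ) (p : X × F) :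
    ((R.toEquiv.prodShear g)^[n] p).1 = R^[n] p.1 :=
  Function.Semiconj.iterate_right (f := Prod.fst) (fun _ => rfl) n p

variable [TopologicalSpace F]

theorem fiber_limitSet_nonempty [Finite F] (hR : IsForwardMinimal R) (p : X × F) (x : X) :
    (Prod.mk x ⁻¹' limitSet (R.toEquiv.prodShear g) p).Nonempty := by
  obtain ⟨𝒰, h𝒰, hfst⟩ := mapClusterPt_iff_ultrafilter.1 (hR.mapClusterPt p.1 x)
  obtain ⟨s, hsnd⟩ : ∃ s, Tendsto (fun n => ((R.toEquiv.prodShear g)^[n] p).2) 𝒰 (𝓝 s) :=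
    ⟨_, (𝒰.map fun n => ((R.toEquiv.prodShear g)^[n] p).2).le_nhds_lim⟩
  simp only [← prodShear_iterate_fst (g := g)] at hfst
  exact ⟨s, mem_limitSet.2 <| mapClusterPt_iff_ultrafilter.2 ⟨𝒰, h𝒰, hfst.prodMk_nhds hsnd⟩⟩

variable [DiscreteTopology F]

theorem continuousAt_prodShear {x : X} (hx : x ∉ jumpSet g) (s : F) :
    ContinuousAt (R.toEquiv.prodShear g) (x, s) := by
  have hmodel : Continuous fun q : X × F => (R q.1, g x q.2) :=
    (R.continuous.comp continuous_fst).prodMk (continuous_of_discreteTopology.comp continuous_snd)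
  refine hmodel.continuousAt.congr ?_
  filter_upwards [continuousAt_fst (not_not.1 hx)] with q hq
  simp [show g q.1 = g x from hq]

theorem continuousAt_prodShear_symm {x : X} (hx : x ∉ jumpSet g) (s : F) :
    ContinuousAt (R.toEquiv.prodShear g).symm (R x, s) := by
  have hmodel : Continuous fun q : X × F => (R.symm q.1, (g x).symm q.2) :=
    (R.symm.continuous.comp continuous_fst).prodMk
      (continuous_of_discreteTopology.comp continuous_snd)
  have hbase : Tendsto (fun q : X × F => R.symm q.1) (𝓝 (R x, s)) (𝓝 x) :=
    (R.symm.continuous.comp continuous_fst).tendsto' _ _ (R.symm_apply_apply x)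
  refine hmodel.continuousAt.congr ?_
  filter_upwards [hbase (not_not.1 hx)] with q hq
  simp [show g (R.symm q.1) = g x from hq]

theorem image_fiber_limitSet {x : X} (hx : x ∉ jumpSet g) (p : X × F) :
    g x '' (Prod.mk x ⁻¹' limitSet (R.toEquiv.prodShear g) p) =
      Prod.mk (R x) ⁻¹' limitSet (R.toEquiv.prodShear g) p := by
  have hmem (s : F) : (R x, g x s) ∈ limitSet (R.toEquiv.prodShear g) p ↔
      (x, s) ∈ limitSet (R.toEquiv.prodShear g) p :=
    apply_mem_limitSet_iff (continuousAt_prodShear hx s) (continuousAt_prodShear_symm hx _) p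
  rw [Equiv.image_eq_preimage_symm]
  ext t
  simpa using (hmem ((g x).symm t)).symm

theorem apply_mem_minFiberSet_iff {x : X} (hx : x ∉ jumpSet g) (p : X × F) :
    R x ∈ minFiberSet (limitSet (R.toEquiv.prodShear g) p) ↔
      x ∈ minFiberSet (limitSet (R.toEquiv.prodShear g) p) := by
  simp only [minFiberSet, mem_ofPred_eq, ← image_fiber_limitSet hx p,
    ncard_image_of_injective _ (g x).injective]

theorem IsForwardMinimal.eq_univ_of_mapsTo [Nonempty X]
    (hT : IsForwardMinimal (R.toEquiv.prodShear g)) {A : Set F} (hA : A.Nonempty)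
    (hinv : ∀ x, MapsTo (g x) A A) : A = univ := by
  obtain ⟨a, ha⟩ := hA
  obtain ⟨x⟩ := ‹Nonempty X›
  have hT_maps : MapsTo (R.toEquiv.prodShear g) (Prod.snd ⁻¹' A) (Prod.snd ⁻¹' A) :=
    fun q hq => hinv q.1 hq
  have huniv : Prod.snd ⁻¹' A = (univ : Set (X × F)) :=
    hT.eq_univ_of_isClosed ((isClosed_discrete A).preimage continuous_snd) (x := (x, a))
      fun n => hT_maps.iterate n ha
  exact eq_univ_of_forall fun s => huniv.ge (mem_univ (x, s))

variable [Finite F]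

theorem compl_minFiberSet_subset_resonantSet (hR : IsForwardMinimal R)
    (hR' : IsForwardMinimal R.symm) (p : X × F) :
    (minFiberSet (limitSet (R.toEquiv.prodShear g) p))ᶜ ⊆
      resonantSet R.toEquiv (jumpSet g) := by
  have : Nonempty X := ⟨p.1⟩
  exact subset_resonantSet hR hR'
    (isOpen_minFiberSet (isClosed_limitSet _ p)).isClosed_compl
    (compl_ne_univ.2 (minFiberSet_nonempty _))
    fun x hx => not_congr (apply_mem_minFiberSet_iff hx p)

theorem exists_invariant_prod_subset_limitSet (hR : IsForwardMinimal R)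
    (hR' : IsForwardMinimal R.symm) {E : Set X} (hE : resonantSet R.toEquiv (jumpSet g) ⊆ E)
    (hconn : IsPreconnected Eᶜ) (hdense : Dense Eᶜ)
    (hg : ∀ x, (interior (g ⁻¹' {g x})).Nonempty) (p : X × F) :
    ∃ A : Set F, A.Nonempty ∧ (∀ x, g x '' A = A) ∧
      univ ×ˢ A ⊆ limitSet (R.toEquiv.prodShear g) p := by
  set K := limitSet (R.toEquiv.prodShear g) p
  have hK : IsClosed K := isClosed_limitSet _ p
  have hEU : Eᶜ ⊆ minFiberSet K :=
    compl_subset_comm.1 ((compl_minFiberSet_subset_resonantSet hR hR' p).trans hE)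
  have hU_dense : Dense (minFiberSet K) := hdense.mono hEU
  have hU_conn : IsPreconnected (minFiberSet K) :=
    hconn.subset_closure hEU (hdense.closure_eq ▸ subset_univ _)
  obtain ⟨x₀, hx₀⟩ : (minFiberSet K).Nonempty := hU_dense.nonempty_iff.2 ⟨p.1⟩
  have hfiber {y : X} (hy : y ∈ minFiberSet K) : Prod.mk y ⁻¹' K = Prod.mk x₀ ⁻¹' K :=
    fiber_eq_of_mem_minFiberSet hK hU_conn hx₀ hy
  refine ⟨Prod.mk x₀ ⁻¹' K, fiber_limitSet_nonempty hR p x₀, fun x => ?_, ?_⟩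
  · obtain ⟨y, hyx, hy, hRy⟩ := (hU_dense.inter_of_isOpen_left (hU_dense.preimage R.isOpenMap)
      (isOpen_minFiberSet hK)).inter_open_nonempty _ isOpen_interior (hg x)
    have hgy : g y = g x := (interior_subset hyx : y ∈ g ⁻¹' {g x})
    have hy_jump : y ∉ jumpSet g := not_not.2 <|
      Eventually.mono (mem_interior_iff_mem_nhds.1 hyx) fun z (hz : g z = g x) => hz.trans hgy.symm
    rw [← hgy, ← hfiber hy, image_fiber_limitSet hy_jump p, hfiber hRy, hfiber hy]
  · rintro ⟨x, s⟩ ⟨-, hs⟩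
    have hclosed : IsClosed ((·, s) ⁻¹' K : Set X) := hK.preimage (by fun_prop)
    have hU : minFiberSet K ⊆ (·, s) ⁻¹' K := fun y hy => (hfiber hy).ge hs
    exact hclosed.closure_subset_iff.2 hU (hU_dense x)

theorem isForwardMinimal_prodShear_iff [Nonempty X] (hR : IsForwardMinimal R)
    (hR' : IsForwardMinimal R.symm) {E : Set X} (hE : resonantSet R.toEquiv (jumpSet g) ⊆ E)
    (hconn : IsPreconnected Eᶜ) (hdense : Dense Eᶜ)
    (hg : ∀ x, (interior (g ⁻¹' {g x})).Nonempty) :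
    IsForwardMinimal (R.toEquiv.prodShear g) ↔
      ∀ A : Set F, A.Nonempty → (∀ x, g x '' A = A) → A = univ := by
  refine ⟨fun hT A hA hinv => hT.eq_univ_of_mapsTo hA fun x => mapsTo_iff_image_subset.2
    (hinv x).le, fun h p q => limitSet_subset_closure_orbit _ p ?_⟩
  obtain ⟨A, hA, hinv, hsub⟩ :=
    exists_invariant_prod_subset_limitSet hR hR' hE hconn hdense hg p
  exact hsub ⟨mem_univ _, h A hA hinv ▸ mem_univ _⟩

end ProdShear

section AddCircle

theorem isForwardMinimal_addRight {G : Type*} [AddGroup G] [TopologicalSpace G]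
    [IsTopologicalAddGroup G] [CompactSpace G] {a : G} (ha : DenseRange fun k : ℤ => k • a) :
    IsForwardMinimal (Homeomorph.addRight a) := by
  intro x
  have hdense := (Homeomorph.addLeft x).surjective.denseRange.comp
    (denseRange_zsmul_iff_nsmul.1 ha) (Homeomorph.addLeft x).continuous
  simpa [DenseRange, Function.comp_def] using hdense

theorem isForwardMinimal_addRight_symm {G : Type*} [AddGroup G] [TopologicalSpace G]
    [IsTopologicalAddGroup G] [CompactSpace G] {a : G} (ha : DenseRange fun k : ℤ => k • a) :
    IsForwardMinimal (Homeomorph.addRight a).symm := by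
  rw [Homeomorph.addRight_symm]
  refine isForwardMinimal_addRight ?_
  simpa [Function.comp_def] using ha.comp neg_surjective.denseRange continuous_of_discreteTopology

variable {p : ℝ} [Fact (0 < p)]

theorem zsmul_injective_of_denseRange {a : AddCircle p} (ha : DenseRange fun k : ℤ => k • a) :
    Function.Injective fun k : ℤ => k • a := by
  rwa [injective_zsmul_iff_not_isOfFinAddOrder, ← addOrderOf_eq_zero_iff,
    ← AddCircle.denseRange_zsmul_iff]

theorem isPreconnected_compl_singleton_addCircle (x : AddCircle p) :
    IsPreconnected ({x}ᶜ : Set (AddCircle p)) := by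
  induction x using QuotientAddGroup.induction_on with
  | H a =>
    let φ := AddCircle.openPartialHomeomorphCoe p a
    have himage : φ '' Ioo a (a + p) = {(a : AddCircle p)}ᶜ := φ.image_source_eq_target
    exact himage ▸ isPreconnected_Ioo.image φ φ.continuousOn

theorem dense_compl_singleton_addCircle (x : AddCircle p) :
    Dense ({x}ᶜ : Set (AddCircle p)) := by
  have : Nontrivial (Ico (0 : ℝ) (0 + p)) :=
    (Ico_infinite (by simpa using Fact.out)).nontrivial.coe_sort
  have : Nontrivial (AddCircle p) := (AddCircle.equivIco p 0).nontrivial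
  exact dense_compl_singleton x

end AddCircle

section MarkedPoints

open AddSubgroup (zmultiples mem_zmultiples)

variable {r : ℕ} {α : ℝ} {β : Fin r → ℝ}

theorem denseRange_zsmul_coe_of_irrational (hα : Irrational α) :
    DenseRange fun k : ℤ => k • (α : UnitAddCircle) :=
  AddCircle.denseRange_zsmul_coe_iff.2 (by rwa [div_one])

theorem mem_ZPlusAlphaZ_of_coe_mem_zmultiples {x : ℝ}
    (hx : (x : UnitAddCircle) ∈ zmultiples (α : UnitAddCircle)) :
    x ∈ ZPlusAlphaZ α := by
  obtain ⟨k, hk⟩ := AddSubgroup.mem_zmultiples_iff.1 hx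
  rw [← AddCircle.coe_zsmul, eq_comm, ← sub_eq_zero, ← AddCircle.coe_sub,
    AddCircle.coe_eq_zero_iff] at hk
  obtain ⟨m, hm⟩ := hk
  refine ⟨m, k, ?_⟩
  simp only [zsmul_eq_mul, mul_one] at hm
  linarith

/-- The marked points on the circle together with `0`, where the first and the last atom of the
partition are adjacent. -/
def markedSet (β : Fin r → ℝ) : Set UnitAddCircle :=
  insert 0 (range fun i => (β i : UnitAddCircle))

theorem coe_one_sub (x : ℝ) : ((1 - x : ℝ) : UnitAddCircle) = -x := by
  rw [AddCircle.coe_sub, AddCircle.coe_period, zero_sub]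

theorem coe_mem_zmultiples_iff_eq_one_sub (hβ : MarkedPointsCond α β) (i : Fin r) :
    (β i : UnitAddCircle) ∈ zmultiples (α : UnitAddCircle) ↔ β i = 1 - α := by
  constructor
  · exact fun hi => of_not_not fun hne =>
      hβ.2.2.1 i hne (mem_ZPlusAlphaZ_of_coe_mem_zmultiples hi)
  · intro hi
    rw [hi, coe_one_sub]
    exact neg_mem (mem_zmultiples _)

theorem eq_zero_or_eq_neg_of_mem_markedSet (hβ : MarkedPointsCond α β) {y : UnitAddCircle}
    (hy : y ∈ markedSet β) (hyα : y ∈ zmultiples (α : UnitAddCircle)) :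
    y = 0 ∨ y = -α := by
  obtain rfl | ⟨i, rfl⟩ := hy
  · exact .inl rfl
  · rw [coe_mem_zmultiples_iff_eq_one_sub hβ] at hyα
    exact .inr ((congrArg _ hyα).trans (coe_one_sub α))

theorem mem_zmultiples_of_mem_markedSet (hβ : MarkedPointsCond α β) {y z : UnitAddCircle}
    (hy : y ∈ markedSet β) (hz : z ∈ markedSet β) (hne : y ≠ z)
    (hyz : y - z ∈ zmultiples (α : UnitAddCircle)) :
    y ∈ zmultiples (α : UnitAddCircle) := by
  obtain rfl | ⟨i, rfl⟩ := hy
  · exact zero_mem _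
  obtain rfl | ⟨j, rfl⟩ := hz
  · simpa using hyz
  by_contra hi
  have hj : (β j : UnitAddCircle) ∉ zmultiples (α : UnitAddCircle) :=
    fun hj => hi (by simpa using add_mem hyz hj)
  rw [coe_mem_zmultiples_iff_eq_one_sub hβ] at hi hj
  exact hβ.2.2.2 i j (fun hij => hne (by rw [hij])) hi hj
    (mem_ZPlusAlphaZ_of_coe_mem_zmultiples hyz)

theorem eq_one_and_eq_neg_of_add_nsmul_mem_markedSet (hα : Irrational α)
    (hβ : MarkedPointsCond α β) {y : UnitAddCircle} {n : ℕ} (hn : n ≠ 0) (hy : y ∈ markedSet β)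
    (hyn : y + n • (α : UnitAddCircle) ∈ markedSet β) : n = 1 ∧ y = -α := by
  have hinj {m k : ℤ} (h : m • (α : UnitAddCircle) = k • (α : UnitAddCircle)) : m = k :=
    zsmul_injective_of_denseRange (denseRange_zsmul_coe_of_irrational hα) h
  have hnα : n • (α : UnitAddCircle) ∈ zmultiples (α : UnitAddCircle) :=
    nsmul_mem (mem_zmultiples _) n
  have hnα_ne : n • (α : UnitAddCircle) ≠ 0 := fun h =>
    hn (by exact_mod_cast hinj (m := n) (k := 0) (by simpa using h))
  have hyα : y ∈ zmultiples (α : UnitAddCircle) :=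
    mem_zmultiples_of_mem_markedSet hβ hy hyn (by simp [hnα_ne]) (by simp [hnα])
  obtain rfl | rfl := eq_zero_or_eq_neg_of_mem_markedSet hβ hy hyα <;>
    obtain h | h := eq_zero_or_eq_neg_of_mem_markedSet hβ hyn (add_mem hyα hnα)
  · exact absurd (by simpa using h) hnα_ne
  · have := hinj (m := n) (k := -1) (by simpa using h)
    omega
  · refine ⟨?_, rfl⟩
    exact_mod_cast hinj (m := n) (k := 1) (by simpa using (neg_add_eq_zero.1 h).symm)
  · exact absurd (by simpa using h) hnα_ne

theorem resonantSet_markedSet_subset (hα : Irrational α) (hβ : MarkedPointsCond α β) :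
    resonantSet (Homeomorph.addRight (α : UnitAddCircle)).toEquiv (markedSet β) ⊆ {0} := by
  rintro x ⟨⟨k, hk⟩, l, hl⟩
  have hk' : x + k • (α : UnitAddCircle) ∈ markedSet β := by
    simpa [add_right_iterate] using hk
  have hl' : x - (l + 1) • (α : UnitAddCircle) ∈ markedSet β := by
    change (· + -(α : UnitAddCircle))^[l + 1] x ∈ markedSet β at hl
    rwa [add_right_iterate_apply, smul_neg, ← sub_eq_add_neg] at hl
  obtain ⟨hn, hx⟩ := eq_one_and_eq_neg_of_add_nsmul_mem_markedSet hα hβ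
    (n := l + 1 + k) (by omega) hl' (by rwa [add_nsmul _ (l + 1), ← add_assoc, sub_add_cancel])
  obtain rfl : l = 0 := by omega
  simpa [sub_eq_neg_self] using hx

end MarkedPoints

section Partition

variable {r : ℕ} {β : Fin r → ℝ}

theorem circleRepr_coe {x : ℝ} (hx : x ∈ Ico 0 1) : circleRepr x = x :=
  AddCircle.equivIco_coe_of_mem (by simpa using hx)

theorem circleRepr_mem_Ico (x : UnitAddCircle) : circleRepr x ∈ Ico 0 1 := by
  simpa only [circleRepr, zero_add] using (AddCircle.equivIco 1 0 x).2

theorem coe_circleRepr (x : UnitAddCircle) : (circleRepr x : UnitAddCircle) = x :=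
  AddCircle.coe_equivIco

theorem continuousAt_circleRepr {x : UnitAddCircle} (hx : x ≠ 0) :
    ContinuousAt circleRepr x :=
  continuousAt_subtype_val.comp (AddCircle.continuousAt_equivIco 1 0 hx)

theorem atomIdx_congr {x y : ℝ} (h : ∀ i, β i ≤ x ↔ β i ≤ y) : atomIdx β x = atomIdx β y := by
  simp only [atomIdx, h]

theorem eventually_atomIdx_eq {x : ℝ} (hx : ∀ i, β i ≠ x) :
    ∀ᶠ y in 𝓝 x, atomIdx β y = atomIdx β x := by
  have hcmp (i : Fin r) : ∀ᶠ y in 𝓝 x, β i ≤ y ↔ β i ≤ x := by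
    obtain hi | hi := (hx i).lt_or_gt
    · filter_upwards [lt_mem_nhds hi] with y hy using iff_of_true hy.le hi.le
    · filter_upwards [gt_mem_nhds hi] with y hy using iff_of_false hy.not_ge hi.not_ge
  exact (eventually_all.2 hcmp).mono fun y hy => atomIdx_congr hy

theorem eventually_atomIdx_eq_right (x : ℝ) :
    ∀ᶠ y in 𝓝[>] x, atomIdx β y = atomIdx β x := by
  have hcmp (i : Fin r) : ∀ᶠ y in 𝓝[>] x, β i ≤ y ↔ β i ≤ x := by
    obtain hi | hi := le_or_gt (β i) x
    · filter_upwards [self_mem_nhdsWithin] with y hy using iff_of_true (hi.trans (le_of_lt hy)) hi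
    · filter_upwards [Ioo_mem_nhdsGT hi] with y hy using iff_of_false hy.2.not_ge hi.not_ge
  exact (eventually_all.2 hcmp).mono fun y hy => atomIdx_congr hy

/-- The index of the atom of the partition of the circle which contains a point. -/
noncomputable def circleAtom (β : Fin r → ℝ) (x : UnitAddCircle) : Fin (r + 1) :=
  atomIdx β (circleRepr x)

theorem jumpSet_circleAtom_subset : jumpSet (circleAtom β) ⊆ markedSet β := by
  refine fun x hx => by_contra fun hmarked => hx ?_
  obtain ⟨hx0, hxβ⟩ := not_or.1 hmarked
  refine continuousAt_circleRepr hx0 (eventually_atomIdx_eq fun i hi => hxβ ⟨i, ?_⟩)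
  simp only [hi, coe_circleRepr]

theorem interior_circleAtom_fiber_nonempty (x : UnitAddCircle) :
    (interior (circleAtom β ⁻¹' {circleAtom β x})).Nonempty := by
  have hx := circleRepr_mem_Ico x
  obtain ⟨u, hu : circleRepr x < u, hsub⟩ := mem_nhdsGT_iff_exists_Ioo_subset.1
    ((eventually_atomIdx_eq_right (β := β) (circleRepr x)).and (Ioo_mem_nhdsGT hx.2))
  have hopen : IsOpen ((fun y : ℝ => (y : UnitAddCircle)) '' Ioo (circleRepr x) u) :=
    QuotientAddGroup.isOpenMap_coe _ isOpen_Ioo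
  refine ((nonempty_Ioo.2 hu).image _).mono (interior_maximal ?_ hopen)
  rintro _ ⟨y, hy, rfl⟩
  obtain ⟨hatom, hyIoo⟩ := hsub hy
  simpa [circleAtom, circleRepr_coe ⟨hx.1.trans hyIoo.1.le, hyIoo.2⟩] using hatom

theorem circleAtom_surjective (hβ : StrictMono β) (h01 : ∀ i, β i ∈ Ioo 0 1) :
    Function.Surjective (circleAtom β) := by
  intro j
  cases j using Fin.cases with
  | zero =>
    refine ⟨0, ?_⟩
    have hrepr : circleRepr 0 = 0 := by simpa using circleRepr_coe (x := 0) (by simp)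
    simp [circleAtom, hrepr, atomIdx, (h01 _).1.not_ge]
  | succ i =>
    refine ⟨β i, ?_⟩
    simp [circleAtom, circleRepr_coe (Ioo_subset_Ico_self (h01 i)), atomIdx, hβ.le_iff_le,
      Finset.filter_ge_eq_Iic, Fin.ext_iff]

end Partition

section VeechSataev

variable {r d : ℕ}

theorem minimalityCondition_iff (σ : Fin (r + 1) → Equiv.Perm (Fin d)) :
    MinimalityCondition σ ↔
      ∀ A : Set (Fin d), A.Nonempty → (∀ j, σ j '' A = A) → A = univ := by
  rw [MinimalityCondition]
  push Not
  exact forall₂_congr fun A _ => not_imp_not.symm.trans (by simp)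

theorem VST_eq_prodShear (α : ℝ) (β : Fin r → ℝ) (σ : Fin (r + 1) → Equiv.Perm (Fin d)) :
    VST α β σ =
      (Homeomorph.addRight (α : UnitAddCircle)).toEquiv.prodShear (σ ∘ circleAtom β) :=
  rfl

end VeechSataev

theorem stmt_3_general {r d : ℕ} {α : ℝ} (hα : Irrational α)
    {β : Fin r → ℝ} (hβ : MarkedPointsCond α β) (σ : Fin (r + 1) → Equiv.Perm (Fin d)) :
    (∀ p : AddCircle (1 : ℝ) × Fin d,
        Dense (Set.range fun n : ℕ => (VST α β σ)^[n] p)) ↔ MinimalityCondition σ := by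
  have hα_dense := denseRange_zsmul_coe_of_irrational hα
  have hres : resonantSet (Homeomorph.addRight (α : AddCircle (1 : ℝ))).toEquiv
      (jumpSet (σ ∘ circleAtom β)) ⊆ {0} :=
    (resonantSet_mono ((jumpSet_comp_subset _ _).trans jumpSet_circleAtom_subset)).trans
      (resonantSet_markedSet_subset hα hβ)
  have hlevel (x) : (interior (σ ∘ circleAtom β ⁻¹' {(σ ∘ circleAtom β) x})).Nonempty :=
    (interior_circleAtom_fiber_nonempty x).mono
      (interior_mono fun y (hy : circleAtom β y = circleAtom β x) => congrArg σ hy)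
  have hsurj : Function.Surjective (circleAtom β) :=
    circleAtom_surjective hβ.2.1 fun i => (hβ.1 i).2
  rw [minimalityCondition_iff, VST_eq_prodShear]
  refine (isForwardMinimal_prodShear_iff (isForwardMinimal_addRight hα_dense)
    (isForwardMinimal_addRight_symm hα_dense) hres (isPreconnected_compl_singleton_addCircle 0)
    (dense_compl_singleton_addCircle 0) hlevel).trans ?_
  exact forall₂_congr fun A _ => imp_congr_left (hsurj.forall (p := fun j => σ j '' A = A)).symm

theorem stmt_3 {r d : ℕ} (hr : 1 ≤ r) (hd : 2 ≤ d)
    (α : ℝ) (hα : Irrational α) (hα0 : 0 < α) (hα1 : α < 1)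
    (β : Fin r → ℝ) (hβ : MarkedPointsCond α β)
    (σ : Fin (r + 1) → Equiv.Perm (Fin d)) (hσ : SigmaAdjacentCond σ) :
    (∀ p : AddCircle (1 : ℝ) × Fin d,
        Dense (Set.range fun n : ℕ => (VST α β σ)^[n] p)) ↔ MinimalityCondition σ :=
  stmt_3_general hα hβ σ
end

section
/- If α has unbounded partial quotients (the sequence (a_n) is unbounded), then for every T-invariant Borel probability measure μ on [0,1) × {1, …, d}, the system (T, μ) is rigid, where T is the generalized Veech–Sataev system. -/
open MeasureTheory Filter Set
open scoped ENNReal symmDiff Classical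

/-!
Let `q_n` be the denominators of the convergents of `α`. When the partial quotients are unbounded,
`q_n ‖q_n α‖ → 0` along a subsequence, so the first `q_n` points of an orbit of the rotation come
within `N ‖q_n α‖` of a discontinuity only for a set of starting points of small Lebesgue measure.
Off this set, translating the base point by `q_n α` up to `N` times does not change the permutation
`g` accumulated in `q_n` steps, so `N q_n` steps accumulate `g ^ N`, which is trivial when `N` is
the exponent of the group of fibre maps. There `T ^ (N q_n)` is a translation of the base by the
small amount `N q_n α`. Hence `T ^ (N q_n)` tends to the identity in measure for every invariant
measure, because the projection of such a measure to the circle is invariant under a dense group of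
translations and so is a multiple of Lebesgue measure.
-/

open scoped NNReal Topology

/-! ### Rigidity from convergence in measure -/

section Rigidity

lemma measurableEmbedding_iterate {X : Type*} [MeasurableSpace X] {T : X → X}
    (hT : MeasurableEmbedding T) (n : ℕ) : MeasurableEmbedding T^[n] := by
  induction n with
  | zero => exact MeasurableEmbedding.id
  | succ n ih => exact ih.comp hT

lemma measure_image_symmDiff_self {X : Type*} [MeasurableSpace X] {μ : Measure X} {f : X → X}
    (hf : MeasurePreserving f μ μ) (hfe : MeasurableEmbedding f) (A : Set X) :
    μ ((f '' A) ∆ A) = μ (A ∆ (f ⁻¹' A)) := by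
  rw [← hf.measure_preimage_emb hfe, preimage_symmDiff, preimage_image_eq _ hfe.injective]

lemma symmDiff_preimage_subset_of_thickening_subset {X : Type*} [PseudoEMetricSpace X] {f : X → X}
    {K A U : Set X} {δ : ℝ} (hKA : K ⊆ A) (hAU : A ⊆ U) (hKU : Metric.thickening δ K ⊆ U) :
    A ∆ (f ⁻¹' A) ⊆ U \ K ∪ f ⁻¹' (U \ K) ∪ {x | .ofReal δ ≤ edist (f x) x} := by
  intro x hx
  by_contra hfar
  obtain ⟨⟨hxUK, hfxUK⟩, hclose⟩ :
      (¬ (x ∈ U ∧ x ∉ K) ∧ ¬ (f x ∈ U ∧ f x ∉ K)) ∧ edist (f x) x < .ofReal δ := by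
    simpa [not_or] using hfar
  have hfxU : x ∈ K → f x ∈ U := fun h =>
    hKU ((Metric.mem_thickening_iff_exists_edist_lt _ _).2 ⟨x, h, hclose⟩)
  have hxU : f x ∈ K → x ∈ U := fun h =>
    hKU ((Metric.mem_thickening_iff_exists_edist_lt _ _).2 ⟨f x, h, edist_comm x (f x) ▸ hclose⟩)
  rcases hx with ⟨hxA, hfxA⟩ | ⟨hfxA, hxA⟩
  · have hxK : x ∈ K := by_contra fun h => hxUK ⟨hAU hxA, h⟩
    exact hfxUK ⟨hfxU hxK, fun h => hfxA (hKA h)⟩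
  · have hfxK : f x ∈ K := by_contra fun h => hfxUK ⟨hAU hfxA, h⟩
    exact hxUK ⟨hxU hfxK, fun h => hxA (hKA h)⟩

variable {X : Type*} [EMetricSpace X] [MeasurableSpace X] [BorelSpace X] {μ : Measure X}
  [IsFiniteMeasure μ] [μ.InnerRegularCompactLTTop]

lemma tendsto_measure_symmDiff_preimage_of_tendstoInMeasure {ι : Type*} {l : Filter ι}
    {f : ι → X → X} (hf : ∀ i, MeasurePreserving (f i) μ μ) (hlim : TendstoInMeasure μ f l id)
    {A : Set X} (hA : MeasurableSet A) :
    Tendsto (fun i => μ (A ∆ (f i ⁻¹' A))) l (𝓝 0) := by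
  refine ENNReal.tendsto_nhds_zero.2 fun ε hε => ?_
  have hε8 : ε / 2 / 2 / 2 ≠ 0 := (ENNReal.half_pos (ENNReal.half_pos
    (ENNReal.half_pos hε.ne').ne').ne').ne'
  obtain ⟨K, hKA, hK, hAK⟩ := hA.exists_isCompact_sdiff_lt (measure_ne_top μ A) hε8
  obtain ⟨U, hAU, hU, -, hUA⟩ := hA.exists_isOpen_sdiff_lt (measure_ne_top μ A) hε8
  obtain ⟨δ, hδ, hKU⟩ := hK.exists_thickening_subset_open hU (hKA.trans hAU)
  have hUK : μ (U \ K) ≤ ε / 2 / 2 := by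
    rw [← sdiff_union_sdiff_cancel hAU hKA, ← ENNReal.add_halves (ε / 2 / 2)]
    exact (measure_union_le _ _).trans (add_le_add hUA.le hAK.le)
  have hpre (i : ι) : μ (f i ⁻¹' (U \ K)) = μ (U \ K) :=
    (hf i).measure_preimage (hU.measurableSet.diff hK.measurableSet).nullMeasurableSet
  filter_upwards [ENNReal.tendsto_nhds_zero.1 (hlim _ (ENNReal.ofReal_pos.2 hδ)) (ε / 2)
    (ENNReal.half_pos hε.ne')] with i hi
  calc μ (A ∆ (f i ⁻¹' A))
      ≤ μ (U \ K ∪ f i ⁻¹' (U \ K) ∪ {x | .ofReal δ ≤ edist (f i x) x}) :=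
        measure_mono (symmDiff_preimage_subset_of_thickening_subset hKA hAU hKU)
    _ ≤ μ (U \ K) + μ (f i ⁻¹' (U \ K)) + μ {x | .ofReal δ ≤ edist (f i x) x} :=
        (measure_union_le _ _).trans (add_le_add_left (measure_union_le _ _) _)
    _ ≤ ε / 2 / 2 + ε / 2 / 2 + ε / 2 := by
        rw [hpre]
        exact add_le_add (add_le_add hUK hUK) hi
    _ = ε := by rw [ENNReal.add_halves, ENNReal.add_halves]

theorem rigid_of_tendstoInMeasure {T : X → X} (hT : MeasurePreserving T μ μ)
    (hTe : MeasurableEmbedding T) {q : ℕ → ℕ} (hq : Tendsto q atTop atTop)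
    (hlim : TendstoInMeasure μ (fun n => T^[q n]) atTop id) : Rigid T μ := by
  refine ⟨q, hq, fun A hA => ?_⟩
  simp only [measure_image_symmDiff_self (hT.iterate _) (measurableEmbedding_iterate hTe _)]
  exact tendsto_measure_symmDiff_preimage_of_tendstoInMeasure (fun n => hT.iterate (q n)) hlim hA

end Rigidity

/-! ### Measures invariant under a dense cyclic group of translations -/

lemma isClosed_setOf_map_add_left_eq {G : Type*} [AddGroup G] [TopologicalSpace G]
    [ContinuousAdd G] [FirstCountableTopology G] [HasOuterApproxClosed G] [MeasurableSpace G]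
    [BorelSpace G] (ν : Measure G) [IsFiniteMeasure ν] :
    IsClosed {g : G | ν.map (g + ·) = ν} := by
  have hmap (g : G) (f : BoundedContinuousFunction G ℝ) :
      ∫ x, f x ∂(ν.map (g + ·)) = ∫ x, f (g + x) ∂ν :=
    integral_map (by fun_prop) f.continuous.aestronglyMeasurable
  have hcont (f : BoundedContinuousFunction G ℝ) : Continuous fun g => ∫ x, f (g + x) ∂ν := by
    refine continuous_of_dominated (bound := fun _ => ‖f‖) (fun g => ?_)
      (fun g => .of_forall fun x => f.norm_coe_le_norm _) (integrable_const _)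
      (.of_forall fun x => by fun_prop)
    exact Continuous.aestronglyMeasurable (by fun_prop)
  have heq : {g : G | ν.map (g + ·) = ν} =
      ⋂ f : BoundedContinuousFunction G ℝ, {g | ∫ x, f (g + x) ∂ν = ∫ x, f x ∂ν} := by
    ext g
    simp only [mem_ofPred_eq, mem_iInter, ← hmap]
    exact ⟨fun h f => by rw [h], ext_of_forall_integral_eq_of_IsFiniteMeasure⟩
  rw [heq]
  exact isClosed_iInter fun f => isClosed_eq (hcont f) continuous_const

lemma isAddLeftInvariant_of_denseRange_zsmul {G : Type*} [AddGroup G] [TopologicalSpace G]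
    [ContinuousAdd G] [FirstCountableTopology G] [HasOuterApproxClosed G]
    [MeasurableSpace G] [BorelSpace G] {ν : Measure G} [IsFiniteMeasure ν] {a : G}
    (ha : DenseRange fun n : ℤ => n • a) (hν : MeasurePreserving (a + ·) ν ν) :
    ν.IsAddLeftInvariant := by
  have hz (n : ℤ) : MeasurePreserving (n • a + ·) ν ν := by
    induction n with
    | zero => simpa [Function.id_def] using MeasurePreserving.id ν
    | succ n ih => simpa [Function.comp_def, add_zsmul, add_assoc] using ih.comp hν
    | pred n ih =>
      simpa [-neg_smul, Function.comp_def, sub_eq_add_neg, add_zsmul, add_assoc] using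
        ih.comp (hν.symm (MeasurableEquiv.addLeft a))
  exact ⟨fun g => (isClosed_setOf_map_add_left_eq ν).closure_subset_iff.2
    (range_subset_iff.2 fun n => (hz n).map_eq) (ha g)⟩

/-! ### Skew products over a translation -/

section SkewTranslation

/-- The skew product `(x, s) ↦ (x + a, φ(x) s)` over the translation by `a`, whose fibre maps come
from the action of a group `H` on `S`. -/
def skewTranslation {G H S : Type*} [Add G] [SMul H S] (a : G) (φ : G → H) : G × S → G × S :=
  fun p => (p.1 + a, φ p.1 • p.2)

/-- The cocycle `φ(x + (n - 1) a) ⋯ φ(x + a) φ(x)` describing the fibre maps of the `n`-th iterate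
of `skewTranslation a φ`. -/
def skewCocycle {G H : Type*} [AddMonoid G] [Monoid H] (a : G) (φ : G → H) : ℕ → G → H
  | 0, _ => 1
  | n + 1, x => φ (x + n • a) * skewCocycle a φ n x

lemma skewTranslation_iterate {G H S : Type*} [AddMonoid G] [Monoid H] [MulAction H S] (a : G)
    (φ : G → H) (n : ℕ) :
    (skewTranslation a φ : G × S → G × S)^[n] = skewTranslation (n • a) (skewCocycle a φ n) := by
  induction n with
  | zero => ext <;> simp [skewTranslation, skewCocycle]
  | succ n ih =>
    rw [Function.iterate_succ', ih]
    ext <;> simp [skewTranslation, skewCocycle, mul_smul, succ_nsmul, add_assoc]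

lemma skewTranslation_injective {G H S : Type*} [AddRightCancelSemigroup G] [Group H]
    [MulAction H S] (a : G) (φ : G → H) :
    Function.Injective (skewTranslation a φ : G × S → G × S) := by
  rintro ⟨x, s⟩ ⟨y, t⟩ h
  obtain ⟨hxy, hst⟩ := Prod.mk.inj h
  obtain rfl : x = y := add_right_cancel hxy
  obtain rfl : s = t := smul_left_cancel _ hst
  rfl

lemma skewCocycle_congr {G H : Type*} [AddMonoid G] [Monoid H] {a : G} {φ : G → H} {x y : G}
    {n : ℕ} (h : ∀ k < n, φ (x + k • a) = φ (y + k • a)) :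
    skewCocycle a φ n x = skewCocycle a φ n y := by
  induction n with
  | zero => rfl
  | succ n ih => rw [skewCocycle, skewCocycle, h n n.lt_succ_self, ih fun k hk => h k (by omega)]

lemma skewCocycle_eq_pow {G H : Type*} [AddMonoid G] [Monoid H] {a : G} {φ : G → H} {x : G}
    {n : ℕ} (h : ∀ k < n, φ (x + k • a) = φ x) : skewCocycle a φ n x = φ x ^ n := by
  induction n with
  | zero => simp [skewCocycle]
  | succ n ih => rw [skewCocycle, h n n.lt_succ_self, ih fun k hk => h k (by omega), pow_succ']

end SkewTranslation

section HittingSet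

variable {G : Type*} [SeminormedAddCommGroup G] {a : G} {D : Finset G} {q : ℕ} {ρ : ℝ}

/-- The points whose first `q` iterates under the translation by `a` come within `ρ` of `D`. -/
def hittingSet (a : G) (D : Finset G) (q : ℕ) (ρ : ℝ) : Set G :=
  {x | ∃ k < q, ∃ c ∈ D, dist (x + k • a) c ≤ ρ}

lemma measure_hittingSet_le [MeasurableSpace G] {μ : Measure G} {b : ℝ≥0∞}
    (hb : ∀ c, μ (Metric.closedBall c ρ) ≤ b) : μ (hittingSet a D q ρ) ≤ q * D.card * b := by
  have hcover : hittingSet a D q ρ ⊆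
      ⋃ i ∈ Finset.range q ×ˢ D, Metric.closedBall (i.2 - i.1 • a) ρ := by
    rintro x ⟨k, hk, c, hc, hxc⟩
    refine mem_biUnion (x := (k, c)) (by simp [hk, hc]) ?_
    rwa [Metric.mem_closedBall, ← dist_add_right _ _ (k • a), sub_add_cancel]
  calc μ (hittingSet a D q ρ)
      ≤ ∑ i ∈ Finset.range q ×ˢ D, μ (Metric.closedBall (i.2 - i.1 • a) ρ) :=
        (measure_mono hcover).trans (measure_biUnion_finset_le _ _)
    _ ≤ (Finset.range q ×ˢ D).card • b := Finset.sum_le_card_nsmul _ _ _ fun i _ => hb _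
    _ = q * D.card * b := by simp

variable {H : Type*} [Monoid H] {φ : G → H}

lemma skewCocycle_eq_of_notMem_hittingSet
    (hφ : ∀ x y, (∀ c ∈ D, dist x y < dist x c) → φ x = φ y) {x y : G}
    (hx : x ∉ hittingSet a D q ρ) (hxy : dist x y ≤ ρ) :
    skewCocycle a φ q x = skewCocycle a φ q y := by
  refine skewCocycle_congr fun k hk => hφ _ _ fun c hc => ?_
  rw [dist_add_right]
  exact hxy.trans_lt (not_le.1 fun h => hx ⟨k, hk, c, hc, h⟩)

lemma skewTranslation_iterate_mul_of_notMem_hittingSet {S : Type*} [MulAction H S]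
    (hφ : ∀ x y, (∀ c ∈ D, dist x y < dist x c) → φ x = φ y) {N : ℕ} (hN : ∀ h : H, h ^ N = 1)
    {x : G} (hx : x ∉ hittingSet a D q (N * ‖q • a‖)) (s : S) :
    (skewTranslation a φ)^[q * N] (x, s) = (x + N • q • a, s) := by
  have hconst : ∀ k < N, skewCocycle a φ q (x + k • q • a) = skewCocycle a φ q x := by
    refine fun k hk => (skewCocycle_eq_of_notMem_hittingSet hφ hx ?_).symm
    calc dist x (x + k • q • a) = ‖k • q • a‖ := by simp
      _ ≤ k * ‖q • a‖ := norm_nsmul_le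
      _ ≤ N * ‖q • a‖ := by gcongr
  rw [Function.iterate_mul, skewTranslation_iterate, skewTranslation_iterate, skewTranslation,
    skewCocycle_eq_pow hconst, hN, one_smul]

lemma edist_skewTranslation_iterate_mul_le {S : Type*} [MulAction H S] [PseudoEMetricSpace S]
    (hφ : ∀ x y, (∀ c ∈ D, dist x y < dist x c) → φ x = φ y) {N : ℕ} (hN : ∀ h : H, h ^ N = 1)
    {z : G × S} (hz : z.1 ∉ hittingSet a D q (N * ‖q • a‖)) :
    edist ((skewTranslation a φ)^[q * N] z) z ≤ ENNReal.ofReal (N * (q * ‖q • a‖)) := by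
  have hnorm : ‖N • q • a‖ ≤ N * (q * ‖q • a‖) := by
    rcases Nat.eq_zero_or_pos q with rfl | hq
    · simp
    · calc ‖N • q • a‖ ≤ N * (1 * ‖q • a‖) := by simpa using norm_nsmul_le
        _ ≤ N * (q * ‖q • a‖) := by gcongr; exact_mod_cast hq
  rw [← Prod.mk.eta (p := z), skewTranslation_iterate_mul_of_notMem_hittingSet hφ hN hz,
    Prod.edist_eq]
  simpa [edist_dist] using ENNReal.ofReal_le_ofReal hnorm

lemma tendstoInMeasure_skewTranslation_iterate [MeasurableSpace G] {S : Type*} [MulAction H S]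
    [PseudoEMetricSpace S] [MeasurableSpace S] {μ : Measure (G × S)} {C : ℝ≥0}
    (hμ : ∀ c r, μ.map Prod.fst (Metric.closedBall c r) ≤ C * ENNReal.ofReal r)
    (hφ : ∀ x y, (∀ c ∈ D, dist x y < dist x c) → φ x = φ y) {N : ℕ} (hN : ∀ h : H, h ^ N = 1)
    {q : ℕ → ℕ} (hq : Tendsto (fun k => q k * ‖q k • a‖) atTop (𝓝 0)) :
    TendstoInMeasure μ (fun k => (skewTranslation a φ)^[q k * N]) atTop id := by
  intro ε hε
  have hbad (k : ℕ) : μ (Prod.fst ⁻¹' hittingSet a D (q k) (N * ‖q k • a‖)) ≤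
      C * D.card * N * ENNReal.ofReal (q k * ‖q k • a‖) :=
    calc μ (Prod.fst ⁻¹' hittingSet a D (q k) (N * ‖q k • a‖))
        ≤ μ.map Prod.fst (hittingSet a D (q k) (N * ‖q k • a‖)) :=
          Measure.le_map_apply measurable_fst.aemeasurable _
      _ ≤ q k * D.card * (C * ENNReal.ofReal (N * ‖q k • a‖)) :=
          measure_hittingSet_le fun c => hμ c _
      _ = C * D.card * N * ENNReal.ofReal (q k * ‖q k • a‖) := by
          simp only [ENNReal.ofReal_mul (Nat.cast_nonneg _), ENNReal.ofReal_natCast]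
          ring
  have hbad_lim : Tendsto (fun k => C * D.card * N * ENNReal.ofReal (q k * ‖q k • a‖)) atTop
      (𝓝 0) := by
    simpa using ENNReal.Tendsto.const_mul (a := C * D.card * N) (ENNReal.tendsto_ofReal hq)
      (.inr (by finiteness))
  have hclose : Tendsto (fun k => ENNReal.ofReal (N * (q k * ‖q k • a‖))) atTop (𝓝 0) := by
    simpa using ENNReal.tendsto_ofReal (hq.const_mul (N : ℝ))
  refine tendsto_of_tendsto_of_tendsto_of_le_of_le' tendsto_const_nhds hbad_lim
    (.of_forall fun _ => zero_le) ?_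
  filter_upwards [hclose.eventually_lt_const hε] with k hk
  refine (measure_mono fun z hz => by_contra fun hgood => ?_).trans (hbad k)
  exact (hz.trans (edist_skewTranslation_iterate_mul_le hφ hN hgood)).not_gt hk

end HittingSet

/-! ### The circle -/

section Circle

lemma image_coe_closedBall (p x ε : ℝ) :
    ((↑) : ℝ → AddCircle p) '' Metric.closedBall x ε = Metric.closedBall (x : AddCircle p) ε := by
  rw [← image_preimage_eq (Metric.closedBall (x : AddCircle p) ε) QuotientAddGroup.mk_surjective,
    AddCircle.coe_real_preimage_closedBall_eq_iUnion, image_iUnion]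
  refine (subset_iUnion_of_subset 0 (by simp)).antisymm (iUnion_subset fun z => ?_)
  rintro _ ⟨y, hy, rfl⟩
  refine ⟨y - z • p, ?_, ?_⟩
  · simpa [Real.dist_eq, sub_sub_eq_add_sub, sub_sub, add_comm] using hy
  · simp [-zsmul_eq_mul, AddCircle.coe_period]

lemma isPreconnected_closedBall_addCircle {p : ℝ} (x : AddCircle p) (ε : ℝ) :
    IsPreconnected (Metric.closedBall x ε) := by
  obtain ⟨x, rfl⟩ := QuotientAddGroup.mk_surjective x
  exact image_coe_closedBall p x ε ▸
    (Metric.isPreconnected_closedBall.image _ (AddCircle.continuous_mk' p).continuousOn)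

lemma eq_of_locallyConstant_off_of_dist_lt {p : ℝ} {Y : Type*} {D : Set (AddCircle p)}
    {φ : AddCircle p → Y} (hφ : ∀ x ∉ D, ∀ᶠ y in 𝓝 x, φ y = φ x) {x y : AddCircle p}
    (hxy : ∀ c ∈ D, dist x y < dist x c) : φ x = φ y := by
  let _ : TopologicalSpace Y := ⊥
  have _ : DiscreteTopology Y := ⟨rfl⟩
  refine (isPreconnected_closedBall_addCircle x (dist x y)).constant (fun z hz => ?_)
    (by simp) (by simp [dist_comm])
  have hzD : z ∉ D := fun hzD => (hxy z hzD).not_ge (by simpa [dist_comm] using hz)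
  exact (continuousAt_const.congr (EventuallyEq.symm (hφ z hzD))).continuousWithinAt

lemma map_fst_closedBall_le_of_measurePreserving {p : ℝ} [Fact (0 < p)] {H S : Type*}
    [SMul H S] [MeasurableSpace S] {a : AddCircle p} {φ : AddCircle p → H}
    (ha : DenseRange fun n : ℤ => n • a) {μ : Measure (AddCircle p × S)} [IsFiniteMeasure μ]
    (hμ : MeasurePreserving (skewTranslation a φ) μ μ) :
    ∃ C : ℝ≥0, ∀ c r, μ.map Prod.fst (Metric.closedBall c r) ≤ C * ENNReal.ofReal r := by
  have hfst : MeasurePreserving (a + ·) (μ.map Prod.fst) (μ.map Prod.fst) := by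
    refine ⟨by fun_prop, ?_⟩
    conv_rhs => rw [← hμ.map_eq]
    rw [Measure.map_map (by fun_prop) measurable_fst, Measure.map_map measurable_fst hμ.measurable]
    congr 1
    ext z
    simp [skewTranslation, add_comm]
  have := isAddLeftInvariant_of_denseRange_zsmul ha hfst
  refine ⟨2 * (μ.map Prod.fst).addHaarScalarFactor volume, fun c r => ?_⟩
  calc μ.map Prod.fst (Metric.closedBall c r)
      = (μ.map Prod.fst).addHaarScalarFactor volume * volume (Metric.closedBall c r) := by
        conv_lhs => rw [Measure.isAddInvariant_eq_smul_of_compactSpace (μ.map Prod.fst) volume]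
        rfl
    _ ≤ (μ.map Prod.fst).addHaarScalarFactor volume * ENNReal.ofReal (2 * r) := by
        rw [AddCircle.volume_closedBall]
        gcongr
        exact min_le_right _ _
    _ = ↑(2 * (μ.map Prod.fst).addHaarScalarFactor volume) * ENNReal.ofReal r := by
        rw [ENNReal.ofReal_mul zero_le_two, ENNReal.ofReal_ofNat, ENNReal.coe_mul,
          ENNReal.coe_ofNat]
        ring

end Circle

/-! ### Rigidity of finite-exponent extensions of rotations -/

theorem stmt_10_general {p : ℝ} [Fact (0 < p)] {a : AddCircle p}
    (ha : DenseRange fun n : ℤ => n • a)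
    (hq : ∀ ε > 0, ∃ᶠ q : ℕ in atTop, q * ‖q • a‖ < ε)
    {H S : Type*} [Group H] (hH : Monoid.ExponentExists H) [MulAction H S] [MeasurableSpace S]
    [StandardBorelSpace S] {φ : AddCircle p → H} {D : Finset (AddCircle p)}
    (hφ : ∀ x ∉ D, ∀ᶠ y in 𝓝 x, φ y = φ x) {μ : Measure (AddCircle p × S)} [IsFiniteMeasure μ]
    (hμ : MeasurePreserving (skewTranslation a φ) μ μ) : Rigid (skewTranslation a φ) μ := by
  let _ := upgradeStandardBorel S
  let _ := TopologicalSpace.upgradeIsCompletelyMetrizable S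
  obtain ⟨C, hC⟩ := map_fst_closedBall_le_of_measurePreserving ha hμ
  obtain ⟨q, hq_mono, hqa⟩ := extraction_forall_of_frequently
    fun k : ℕ => hq (1 / (k + 1)) Nat.one_div_pos_of_nat
  have hlim : Tendsto (fun k => q k * ‖q k • a‖) atTop (𝓝 0) :=
    squeeze_zero (fun k => by positivity) (fun k => (hqa k).le)
      tendsto_one_div_add_atTop_nhds_zero_nat
  have hN : 0 < Monoid.exponent H := hH.exponent_pos
  exact rigid_of_tendstoInMeasure hμ
    (hμ.measurable.measurableEmbedding (skewTranslation_injective a φ))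
    (hq_mono.tendsto_atTop.atTop_mul_const' hN)
    (tendstoInMeasure_skewTranslation_iterate hC
      (fun _ _ => eq_of_locallyConstant_off_of_dist_lt hφ) Monoid.pow_exponent_eq_one hlim)

/-! ### Continued fractions -/

section ContinuedFraction

variable {α : ℝ}

lemma irrational_cfPair_div (hα : Irrational α) (n : ℕ) :
    Irrational ((cfPair α n).1 / (cfPair α n).2) := by
  induction n with
  | zero => simpa [cfPair] using hα.inv
  | succ n ih =>
    have hne : (cfPair α n).2 ≠ 0 := fun h => ih.ne_zero (by rw [h, div_zero])
    have hgauss : (cfPair α (n + 1)).1 / (cfPair α (n + 1)).2 =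
        ((cfPair α n).1 / (cfPair α n).2 - ⌊(cfPair α n).1 / (cfPair α n).2⌋)⁻¹ := by
      rw [cfPair, ← inv_div, sub_div, mul_div_cancel_right₀ _ hne]
    rw [hgauss]
    exact (ih.sub_intCast _).inv

lemma cfPair_snd_pos_and_lt (hα : Irrational α) (h01 : α ∈ Ioo 0 1) (n : ℕ) :
    0 < (cfPair α n).2 ∧ (cfPair α n).2 < (cfPair α n).1 := by
  induction n with
  | zero => exact h01
  | succ n ih =>
    have hfract : (cfPair α (n + 1)).2 =
        Int.fract ((cfPair α n).1 / (cfPair α n).2) * (cfPair α n).2 := by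
      rw [Int.fract, sub_mul, div_mul_cancel₀ _ ih.1.ne', cfPair]
    have hpos : 0 < Int.fract ((cfPair α n).1 / (cfPair α n).2) :=
      (Int.fract_nonneg _).lt_of_ne' ((irrational_cfPair_div hα n).sub_intCast _).ne_zero
    rw [hfract]
    exact ⟨mul_pos hpos ih.1, mul_lt_of_lt_one_left ih.1 (Int.fract_lt_one _)⟩

lemma one_le_floor_cfPair_div (hα : Irrational α) (h01 : α ∈ Ioo 0 1) (n : ℕ) :
    1 ≤ ⌊(cfPair α n).1 / (cfPair α n).2⌋ := by
  obtain ⟨hpos, hlt⟩ := cfPair_snd_pos_and_lt hα h01 n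
  exact Int.le_floor.2 (by exact_mod_cast ((one_lt_div hpos).2 hlt).le)

lemma pq_succ_cast (hα : Irrational α) (h01 : α ∈ Ioo 0 1) (n : ℕ) :
    (pq α (n + 1) : ℤ) = ⌊(cfPair α n).1 / (cfPair α n).2⌋ :=
  Int.toNat_of_nonneg (zero_le_one.trans (one_le_floor_cfPair_div hα h01 n))

lemma pq_succ_pos (hα : Irrational α) (h01 : α ∈ Ioo 0 1) (n : ℕ) : 0 < pq α (n + 1) := by
  have h := one_le_floor_cfPair_div hα h01 n
  have := pq_succ_cast hα h01 n
  omega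

lemma cfPair_succ_snd (hα : Irrational α) (h01 : α ∈ Ioo 0 1) (n : ℕ) :
    (cfPair α (n + 1)).2 = (cfPair α n).1 - pq α (n + 1) * (cfPair α n).2 := by
  rw [cfPair, ← pq_succ_cast hα h01, Int.cast_natCast]

lemma qPair_mul_cfPair_add (hα : Irrational α) (h01 : α ∈ Ioo 0 1) (n : ℕ) :
    (qPair α n).2 * (cfPair α n).1 + (qPair α n).1 * (cfPair α n).2 = 1 := by
  induction n with
  | zero => simp [qPair, cfPair]
  | succ n ih =>
    rw [cfPair_succ_snd hα h01, ← ih]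
    simp only [qPair, cfPair]
    push_cast
    ring

lemma coe_cfPair (hα : Irrational α) (h01 : α ∈ Ioo 0 1) (n : ℕ) :
    ((cfPair α n).1 : UnitAddCircle) = -((-1 : ℤ) ^ n • (qPair α n).1 • (α : UnitAddCircle)) ∧
      ((cfPair α n).2 : UnitAddCircle) = (-1 : ℤ) ^ n • (qPair α n).2 • (α : UnitAddCircle) := by
  induction n with
  | zero => simp [cfPair, qPair, AddCircle.coe_period]
  | succ n ih =>
    refine ⟨by simp [cfPair, qPair, ih.2, pow_succ], ?_⟩
    rw [cfPair_succ_snd hα h01, ← nsmul_eq_mul, AddCircle.coe_sub, AddCircle.coe_nsmul, ih.1,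
      ih.2, qPair]
    module

lemma norm_qDen_nsmul_le (hα : Irrational α) (h01 : α ∈ Ioo 0 1) (n : ℕ) :
    ‖qDen α n • (α : UnitAddCircle)‖ ≤ alphaSeq α n := by
  have hsign : ‖((cfPair α n).2 : UnitAddCircle)‖ = ‖qDen α n • (α : UnitAddCircle)‖ := by
    rw [(coe_cfPair hα h01 n).2, qDen]
    rcases neg_one_pow_eq_or ℤ n with h | h <;> simp [h]
  calc ‖qDen α n • (α : UnitAddCircle)‖
      ≤ ‖(cfPair α n).2‖ := hsign ▸ QuotientAddGroup.norm_mk_le_norm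
    _ = alphaSeq α n := Real.norm_of_nonneg (cfPair_snd_pos_and_lt hα h01 n).1.le

lemma pq_succ_mul_qDen_mul_alphaSeq_le_one (hα : Irrational α) (h01 : α ∈ Ioo 0 1)
    (n : ℕ) : pq α (n + 1) * (qDen α n * alphaSeq α n) ≤ 1 := by
  have hpos := (cfPair_snd_pos_and_lt hα h01 n).1
  have hnext := (cfPair_snd_pos_and_lt hα h01 (n + 1)).1
  rw [cfPair_succ_snd hα h01, sub_pos] at hnext
  calc pq α (n + 1) * (qDen α n * alphaSeq α n)
      = (qPair α n).2 * (pq α (n + 1) * (cfPair α n).2) := by rw [qDen, alphaSeq]; ring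
    _ ≤ (qPair α n).2 * (cfPair α n).1 + (qPair α n).1 * (cfPair α n).2 :=
        le_add_of_le_of_nonneg (by gcongr) (by positivity)
    _ = 1 := qPair_mul_cfPair_add hα h01 n

lemma qDen_pos (hα : Irrational α) (h01 : α ∈ Ioo 0 1) (n : ℕ) : 0 < qDen α n := by
  induction n with
  | zero => exact one_pos
  | succ n ih => exact Nat.add_pos_left (Nat.mul_pos (pq_succ_pos hα h01 n) ih) _

lemma tendsto_qDen (hα : Irrational α) (h01 : α ∈ Ioo 0 1) :
    Tendsto (qDen α) atTop atTop := by
  have hlt (n : ℕ) : qDen α (n + 1) < qDen α (n + 2) := by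
    calc qDen α (n + 1) < pq α (n + 2) * qDen α (n + 1) + qDen α n :=
          lt_add_of_le_of_pos (Nat.le_mul_of_pos_left _ (pq_succ_pos hα h01 (n + 1)))
            (qDen_pos hα h01 n)
      _ = qDen α (n + 2) := rfl
  exact (tendsto_add_atTop_iff_nat 1).1 (strictMono_nat_of_lt_succ hlt).tendsto_atTop

lemma frequently_lt_pq_succ (hub : ¬ BoundedPartialQuotients α) (C : ℕ) :
    ∃ᶠ n in atTop, C < pq α (n + 1) := by
  intro h
  have hbdd : IsBoundedUnder (· ≤ ·) atTop fun n => pq α (n + 1) :=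
    ⟨C, eventually_map.2 (h.mono fun _ => not_lt.1)⟩
  obtain ⟨B, hB⟩ := hbdd.bddAbove_range
  refine hub ⟨B, fun n hn => ?_⟩
  obtain ⟨m, rfl⟩ := Nat.exists_eq_add_of_le' hn
  exact hB ⟨m, rfl⟩

theorem frequently_mul_norm_nsmul_lt (hα : Irrational α) (h01 : α ∈ Ioo 0 1)
    (hub : ¬ BoundedPartialQuotients α) {ε : ℝ} (hε : 0 < ε) :
    ∃ᶠ q : ℕ in atTop, q * ‖q • (α : UnitAddCircle)‖ < ε := by
  obtain ⟨C, hC⟩ := exists_nat_gt ε⁻¹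
  refine (tendsto_qDen hα h01).frequently ((frequently_lt_pq_succ hub C).mono fun n hn => ?_)
  have hlarge : ε⁻¹ < pq α (n + 1) := hC.trans (by exact_mod_cast hn)
  calc qDen α n * ‖qDen α n • (α : UnitAddCircle)‖
      ≤ qDen α n * alphaSeq α n := by gcongr; exact norm_qDen_nsmul_le hα h01 n
    _ ≤ (pq α (n + 1) : ℝ)⁻¹ := by
        rw [← one_div, le_div_iff₀' ((inv_pos.2 hε).trans hlarge)]
        exact pq_succ_mul_qDen_mul_alphaSeq_le_one hα h01 n
    _ < ε := inv_lt_of_inv_lt₀ hε hlarge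

end ContinuedFraction

/-! ### Marked points -/

section MarkedPoints

lemma eventually_le_iff_of_ne {X : Type*} [TopologicalSpace X] {f : X → ℝ} {x : X} {b : ℝ}
    (hf : ContinuousAt f x) (hx : f x ≠ b) : ∀ᶠ y in 𝓝 x, (b ≤ f y ↔ b ≤ f x) := by
  rcases hx.lt_or_gt with h | h
  · filter_upwards [hf.eventually_lt_const h] with y hy
    simp [hy.not_ge, h.not_ge]
  · filter_upwards [hf.eventually_const_lt h] with y hy
    simp [hy.le, h.le]

lemma eventually_sigmaOf_circleRepr_eq {r d : ℕ} (β : Fin r → ℝ)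
    (σ : Fin (r + 1) → Equiv.Perm (Fin d)) {x : AddCircle (1 : ℝ)} (hx0 : x ≠ 0)
    (hxβ : ∀ i, x ≠ β i) :
    ∀ᶠ y in 𝓝 x, sigmaOf β σ (circleRepr y) = sigmaOf β σ (circleRepr x) := by
  have hcont : ContinuousAt circleRepr x :=
    continuous_subtype_val.continuousAt.comp (AddCircle.continuousAt_equivIco 1 0 hx0)
  have hne (i : Fin r) : circleRepr x ≠ β i := fun h =>
    hxβ i (h ▸ AddCircle.coe_equivIco.symm)
  filter_upwards [eventually_all.2 fun i => eventually_le_iff_of_ne hcont (hne i)] with y hy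
  simp only [sigmaOf, atomIdx, hy]

end MarkedPoints

theorem stmt_10 {r d : ℕ} (hr : 1 ≤ r) (hd : 2 ≤ d)
    (α : ℝ) (hα : Irrational α) (hα0 : 0 < α) (hα1 : α < 1)
    (β : Fin r → ℝ) (hβ : MarkedPointsCond α β)
    (σ : Fin (r + 1) → Equiv.Perm (Fin d)) (hσ : SigmaAdjacentCond σ)
    (hub : ¬ BoundedPartialQuotients α) :
    ∀ μ : Measure (AddCircle (1 : ℝ) × Fin d), IsProbabilityMeasure μ →
      MeasurePreserving (VST α β σ) μ μ → Rigid (VST α β σ) μ := by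
  intro μ _ hμ
  refine stmt_10_general (φ := fun x => sigmaOf β σ (circleRepr x))
    (D := insert 0 (Finset.univ.image fun i => (β i : AddCircle (1 : ℝ))))
    (AddCircle.denseRange_zsmul_coe_iff.2 (by simpa using hα))
    (fun ε => frequently_mul_norm_nsmul_lt hα ⟨hα0, hα1⟩ hub) .of_finite (fun x hx => ?_) hμ
  simp only [Finset.mem_insert, Finset.mem_image, Finset.mem_univ, true_and, not_or,
    not_exists] at hx
  exact eventually_sigmaOf_circleRepr_eq β σ hx.1 fun i h => hx.2 i h.symm
end
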